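/- Let C be a commutative Noetherian ring with Krull dimension D < ∞ and let A = C[x_1,…,x_n]. Then for every r ≥ max(3, D+2) and every column b ∈ IUm_{2r}(A), the first standard basis column e_1 belongs to EO(2r,A)^{≤N} · b, where N = n(11r−7) + (nD + r(r−1)/2)·(r(r−1)/2 + ⌈(r−1)/2⌉ + 8r−2) + 8r−8. -/

import Mathlib

open Matrix

section EvenDefs

variable {R : Type*} [CommRing R]

/-- In the basis `e_1,…,e_r,e_{-r},…,e_{-1}` of `R^{2r}` (0-indexed by `Fin (2*r)`),
the position of `e_{-i}` given the position of `e_i` (and vice versa). -/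
def negE (r : ℕ) (i : Fin (2 * r)) : Fin (2 * r) := ⟨2 * r - 1 - i.val, by omega⟩

/-- The split quadratic form `q(x) = ∑_{i=1}^r x_i x_{-i}` on `R^{2r}`. -/
def quadE (r : ℕ) (x : Fin (2 * r) → R) : R :=
  ∑ i : Fin r, x ⟨i.val, by omega⟩ * x ⟨2 * r - 1 - i.val, by omega⟩

/-- The even split orthogonal group `O(2r,R)`, as a set of matrices. -/
def OE (r : ℕ) (R : Type*) [CommRing R] : Set (Matrix (Fin (2 * r)) (Fin (2 * r)) R) :=
  {g | IsUnit g ∧ ∀ x : Fin (2 * r) → R, quadE r (g.mulVec x) = quadE r x}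

/-- The elementary orthogonal transvection `T_{i,j}(ξ) = e + ξ e_{i,j} - ξ e_{-j,-i}`. -/
def TE (r : ℕ) (i j : Fin (2 * r)) (ξ : R) : Matrix (Fin (2 * r)) (Fin (2 * r)) R :=
  1 + ξ • Matrix.single i j 1 - ξ • Matrix.single (negE r j) (negE r i) 1

/-- Being an elementary orthogonal transvection (even case): `T_{i,j}(ξ)` with `i ≠ ±j`. -/
def IsElemE (r : ℕ) (g : Matrix (Fin (2 * r)) (Fin (2 * r)) R) : Prop :=
  ∃ i j : Fin (2 * r), ∃ ξ : R, i ≠ j ∧ i ≠ negE r j ∧ g = TE r i j ξ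

/-- `EO(2r,R)^{≤N}` : products of at most `N` elementary orthogonal transvections. -/
def EOE (r N : ℕ) (R : Type*) [CommRing R] : Set (Matrix (Fin (2 * r)) (Fin (2 * r)) R) :=
  {g | ∃ L : List (Matrix (Fin (2 * r)) (Fin (2 * r)) R),
    L.length ≤ N ∧ (∀ m ∈ L, IsElemE r m) ∧ g = L.prod}

/-- `IUm_{2r}(R)` : isotropic unimodular columns. -/
def IUmE (r : ℕ) (R : Type*) [CommRing R] : Set (Fin (2 * r) → R) :=
  {b | Ideal.span (Set.range b) = ⊤ ∧ quadE r b = 0}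

end EvenDefs

theorem PA_sep {A : Type*} [CommRing A] (M : Set (Ideal A)) (hfin : M.Finite)
    (hp : ∀ m ∈ M, m.IsPrime) (hanti : ∀ m ∈ M, ∀ m' ∈ M, m ≤ m' → m = m')
    (q : Ideal A → Prop) : ∃ c : A, ∀ m ∈ M, (c ∈ m ↔ ¬ q m) := by
  classical
  have h1 : ∀ m : Ideal A, ∃ x : A, m ∈ M → x ∉ m ∧ ∀ m' ∈ M, m' ≠ m → x ∈ m' := by
    intro m
    by_cases hm : m ∈ M
    · have := hp m hm
      have h2 : ¬ ((hfin.toFinset.erase m).inf id ≤ m) := by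
        rw [Ideal.IsPrime.inf_le' this]
        rintro ⟨m', hm', hle⟩
        simp only [Finset.mem_erase, Set.Finite.mem_toFinset] at hm'
        exact hm'.1 (hanti m' hm'.2 m hm hle)
      obtain ⟨x, hx, hxm⟩ := Set.not_subset.mp h2
      refine ⟨x, fun _ => ⟨hxm, fun m' hm' hne => ?_⟩⟩
      have : (hfin.toFinset.erase m).inf id ≤ id m' :=
        Finset.inf_le (by simp [hm', hne])
      exact this hx
    · exact ⟨0, fun h => absurd h hm⟩
  choose x hx using h1
  refine ⟨∑ m ∈ hfin.toFinset.filter q, x m, fun m hm => ?_⟩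
  by_cases hq : q m
  · simp only [hq, not_true_eq_false, iff_false]
    rw [← Finset.add_sum_erase _ _ (show m ∈ hfin.toFinset.filter q by simp [hm, hq])]
    intro hmem
    have h3 : ∑ k ∈ (hfin.toFinset.filter q).erase m, x k ∈ m := by
      refine Ideal.sum_mem _ fun k hk => ?_
      simp only [Finset.mem_erase, Finset.mem_filter, Set.Finite.mem_toFinset] at hk
      exact (hx k hk.2.1).2 m hm (Ne.symm hk.1)
    exact (hx m hm).1 ((Ideal.add_mem_iff_left _ h3).mp hmem)
  · simp only [hq, not_false_eq_true, iff_true]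
    refine Ideal.sum_mem _ fun k hk => ?_
    simp only [Finset.mem_filter, Set.Finite.mem_toFinset] at hk
    refine (hx k hk.1).2 m hm ?_
    rintro rfl
    exact hq hk.2

theorem minPrimes_anti {A : Type*} [CommRing A] (I : Ideal A) :
    ∀ m ∈ I.minimalPrimes, ∀ m' ∈ I.minimalPrimes, m ≤ m' → m = m' := by
  intro m hm m' hm' hle
  exact le_antisymm hle (hm'.2 hm.1 hle)

theorem height_succ_le {A : Type*} [CommRing A] [IsNoetherianRing A] {Q P : Ideal A}
    [Q.IsPrime] [P.IsPrime] (h : Q < P) {k : ℕ} (hk : (k : ℕ∞) ≤ Q.height) :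
    ((k + 1 : ℕ) : ℕ∞) ≤ P.height := by
  have hfin : Q.height ≠ ⊤ := Ideal.height_ne_top (Ideal.IsPrime.ne_top inferInstance)
  have := Ideal.height_strict_mono_of_isPrime_of_isPrime h
  push_cast
  have h2 : Q.height + 1 ≤ P.height := Order.add_one_le_of_lt this
  exact le_trans (by gcongr) h2

theorem SR_lemma {R κ : Type*} [CommRing R] [IsNoetherianRing R] (K : Finset κ)
    (a : κ → R) (a0 : R) :
    ∃ c : κ → R, ∀ P : Ideal R, P.IsPrime → (∀ k ∈ K, a k + c k * a0 ∈ P) →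
      a0 ∈ P ∨ (K.card : ℕ∞) ≤ P.height := by
  classical
  induction K using Finset.induction_on with
  | empty => exact ⟨0, fun P _ _ => Or.inr (by simp)⟩
  | insert k K hk ih =>
    obtain ⟨c, hc⟩ := ih
    set I : Ideal R := Ideal.span ((fun k => a k + c k * a0) '' (K : Set κ)) with hI
    obtain ⟨x, hx⟩ := PA_sep (I.minimalPrimes ∩ {Q | a0 ∉ Q})
      ((Ideal.finite_minimalPrimes_of_isNoetherianRing R I).subset Set.inter_subset_left)
      (fun m hm => hm.1.1.1) (fun m hm m' hm' => minPrimes_anti I m hm.1 m' hm'.1)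
      (fun Q => a k ∈ Q)
    refine ⟨Function.update c k x, fun P hP hmem => ?_⟩
    by_cases h0 : a0 ∈ P
    · exact Or.inl h0
    right
    have hIP : I ≤ P := by
      rw [hI, Ideal.span_le]
      rintro _ ⟨j, hj, rfl⟩
      have := hmem j (Finset.mem_insert_of_mem hj)
      rwa [Function.update_of_ne (by rintro rfl; exact hk hj)] at this
    obtain ⟨Q, hQ, hQP⟩ := Ideal.exists_minimalPrimes_le hIP
    have hQ0 : a0 ∉ Q := fun h => h0 (hQP h)
    have hQp : Q.IsPrime := hQ.1.1
    have hk' : a k + x * a0 ∈ P := by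
      have := hmem k (Finset.mem_insert_self _ _)
      rwa [Function.update_self] at this
    have hkQ : a k + x * a0 ∉ Q := by
      intro h
      have hxx := hx Q ⟨hQ, hQ0⟩
      by_cases hak : a k ∈ Q
      · have := (Ideal.add_mem_iff_right _ hak).mp h
        rcases hQp.mem_or_mem this with h | h
        · exact (hxx.mp h) hak
        · exact hQ0 h
      · have hx' : x ∈ Q := hxx.mpr hak
        exact hak ((Ideal.add_mem_iff_left _ (Ideal.mul_mem_right _ _ hx')).mp h)
    have hlt : Q < P := lt_of_le_of_ne hQP (by rintro rfl; exact hkQ hk')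
    rcases hc Q hQp (fun j hj => hQ.1.2 (Ideal.subset_span ⟨j, hj, rfl⟩)) with h | h
    · exact absurd h hQ0
    · rw [Finset.card_insert_of_notMem hk]
      exact height_succ_le hlt h

theorem PS_lemma {A : Type*} [CommRing A] [IsNoetherianRing A] (d : ℕ)
    (hd : ∀ P : Ideal A, P.IsPrime → P.height ≤ d) (G : A → Prop)
    (hG : ∀ F : Set (Ideal A), F.Finite → (∀ p ∈ F, p.IsPrime) →
      (∀ m ∈ F, ∀ m' ∈ F, m ≤ m' → m = m') → ∃ s, G s ∧ ∀ p ∈ F, s ∉ p) :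
    ∃ L : List A, L.length = d + 1 ∧ (∀ s ∈ L, G s) ∧ Ideal.span {x | x ∈ L} = ⊤ := by
  have key : ∀ i : ℕ, ∃ L : List A, L.length = i ∧ (∀ s ∈ L, G s) ∧
      ∀ P : Ideal A, P.IsPrime → (∀ x ∈ L, x ∈ P) → (i : ℕ∞) ≤ P.height := by
    intro i
    induction i with
    | zero => exact ⟨[], rfl, by simp, by simp⟩
    | succ i ih =>
      obtain ⟨L, hL, hLG, hLP⟩ := ih
      obtain ⟨s, hs, hsF⟩ := hG (Ideal.span {x | x ∈ L}).minimalPrimes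
        (Ideal.finite_minimalPrimes_of_isNoetherianRing A _) (fun m hm => hm.1.1)
        (minPrimes_anti _)
      refine ⟨s :: L, by simp [hL], by simpa using ⟨hs, hLG⟩, fun P hP hmem => ?_⟩
      have hIP : Ideal.span {x | x ∈ L} ≤ P :=
        Ideal.span_le.mpr fun x hx => hmem x (List.mem_cons_of_mem _ hx)
      obtain ⟨Q, hQ, hQP⟩ := Ideal.exists_minimalPrimes_le hIP
      have hQp : Q.IsPrime := hQ.1.1
      have hlt : Q < P := lt_of_le_of_ne hQP
        (by rintro rfl; exact hsF _ hQ (hmem s (by simp)))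
      exact height_succ_le hlt (hLP Q hQp fun x hx => hQ.1.2 (Ideal.subset_span hx))
  obtain ⟨L, hL, hLG, hLP⟩ := key (d + 1)
  refine ⟨L, hL, hLG, ?_⟩
  by_contra hne
  obtain ⟨P, hP, hle⟩ := Ideal.exists_le_maximal _ hne
  have h1 := hLP P hP.isPrime fun x hx => hle (Ideal.subset_span hx)
  have h2 := hd P hP.isPrime
  have := h1.trans h2
  norm_cast at this
  omega

open Polynomial in
theorem height_poly_of_max {R : Type*} [CommRing R] [IsNoetherianRing R] (p : Ideal R)
    [p.IsMaximal] (P : Ideal R[X]) [P.IsPrime] [P.LiesOver p] : P.height ≤ p.height + 1 := by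
  let _ : Field (R ⧸ p) := Ideal.Quotient.field p
  suffices h : (P.map (Ideal.Quotient.mk (Ideal.map (algebraMap R R[X]) p))).height ≤ 1 from
    (Ideal.height_le_height_add_of_liesOver p P).trans (by gcongr)
  let e : (R[X] ⧸ (p.map (algebraMap R R[X]))) ≃+* (R ⧸ p)[X] :=
    (Ideal.polynomialQuotientEquivQuotientPolynomial p).symm
  have hp : (P.map (Ideal.Quotient.mk <| p.map (algebraMap R R[X]))).IsPrime := by
    refine Ideal.map_isPrime_of_surjective Ideal.Quotient.mk_surjective ?_
    rw [Ideal.mk_ker, Ideal.LiesOver.over (P := P) (p := p)]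
    exact Ideal.map_comap_le
  rw [← e.height_map]
  have hne : Ideal.map e (P.map (Ideal.Quotient.mk <| p.map (algebraMap R R[X]))) ≠ ⊤ :=
    (Ideal.map_isPrime_of_equiv e).ne_top
  have h1 := Ideal.height_le_ringKrullDim_of_ne_top hne
  rw [Polynomial.ringKrullDim_of_isNoetherianRing, ringKrullDim_eq_zero_of_field, zero_add] at h1
  exact_mod_cast h1

open Polynomial Ideal IsLocalization in
theorem height_poly_le {R : Type*} [CommRing R] [IsNoetherianRing R] (p : Ideal R)
    (P : Ideal R[X]) [P.IsPrime] [P.LiesOver p] :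
    P.height ≤ p.height + 1 := by
  have : p.IsPrime := by rw [P.over_def p]; infer_instance
  let Rₚ := Localization.AtPrime p
  letI : Algebra R[X] Rₚ[X] := Polynomial.algebra R Rₚ
  haveI : IsLocalization (p.primeCompl.map C) Rₚ[X] := Polynomial.isLocalization p.primeCompl Rₚ
  set p' : Ideal Rₚ := p.map (algebraMap R Rₚ) with p'_def
  have : p'.IsMaximal := by
    rw [p'_def, Localization.AtPrime.map_eq_maximalIdeal]
    exact IsLocalRing.maximalIdeal.isMaximal Rₚ
  let P' : Ideal Rₚ[X] := P.map (algebraMap R[X] Rₚ[X])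
  have disj : Disjoint (p.primeCompl.map C : Set R[X]) P := by
    refine Set.disjoint_left.mpr fun a ⟨b, hb⟩ ha ↦ hb.1 ?_
    rwa [SetLike.mem_coe, LiesOver.over (P := P) (p := p), mem_comap, algebraMap_eq, hb.2]
  have : P'.IsPrime := isPrime_of_isPrime_disjoint (p.primeCompl.map C) _ P inferInstance disj
  have : P'.LiesOver p' := liesOver_of_isPrime_of_disjoint p.primeCompl _ _ disj
  have eq1 : p.height = p'.height := by
    rw [height_map_of_disjoint p.primeCompl]
    exact Disjoint.symm <| Set.disjoint_left.mpr fun _ a b ↦ b a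
  have eq2 : P.height = P'.height := by
    rw [height_map_of_disjoint (Submonoid.map C <| p.primeCompl) _ disj]
  rw [eq1, eq2]
  apply height_poly_of_max p' P'

open Polynomial in
theorem height_map_C_le {R : Type*} [CommRing R] [IsNoetherianRing R] (p : Ideal R)
    [p.IsPrime] : (p.map (C : R →+* R[X])).height ≤ p.height := by
  have : (p.map (C : R →+* R[X])).IsPrime := Ideal.isPrime_map_C_of_isPrime
  have : (p.map (C : R →+* R[X])).LiesOver p := by
    constructor
    ext x
    rw [Ideal.under_def, Ideal.mem_comap, Polynomial.algebraMap_eq, Ideal.mem_map_C_iff]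
    constructor
    · intro h n
      rw [coeff_C]; split_ifs <;> simp [h]
    · intro h; simpa using h 0
  have h := Ideal.height_le_height_add_of_liesOver p (p.map (C : R →+* R[X]))
  have h0 : ((p.map (C : R →+* R[X])).map
      (Ideal.Quotient.mk (p.map (algebraMap R R[X])))) = ⊥ := Ideal.map_quotient_self _
  have : Nontrivial (R[X] ⧸ (p.map (algebraMap R R[X]))) :=
    Ideal.Quotient.nontrivial_iff.mpr (Ideal.IsPrime.ne_top (I := p.map (C : R →+* R[X])) inferInstance)
  rw [h0, Ideal.height_bot, add_zero] at h
  exact h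

/-- the submonoid of polynomials with leading coefficient in `S`. -/
def lcS {R : Type*} [CommRing R] (S : Submonoid R) (h0 : (0 : R) ∉ S) :
    Submonoid (Polynomial R) where
  carrier := {f | f.leadingCoeff ∈ S}
  one_mem' := by simp
  mul_mem' := by
    intro f g hf hg
    have h1 : f.leadingCoeff * g.leadingCoeff ∈ S := S.mul_mem hf hg
    have h2 : f.leadingCoeff * g.leadingCoeff ≠ 0 := fun h => h0 (h ▸ h1)
    change (f * g).leadingCoeff ∈ S
    rw [Polynomial.leadingCoeff_mul' h2]
    exact h1

theorem lcS_zero {R : Type*} [CommRing R] (S : Submonoid R) (h0 : (0 : R) ∉ S) :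
    (0 : Polynomial R) ∉ lcS S h0 := by
  intro h
  have h : (0 : Polynomial R).leadingCoeff ∈ S := h
  simp at h
  exact h0 h

theorem mem_lcS {R : Type*} [CommRing R] (S : Submonoid R) (h0 : (0 : R) ∉ S)
    (f : Polynomial R) : f ∈ lcS S h0 ↔ f.leadingCoeff ∈ S := Iff.rfl

open Polynomial in
theorem lcS_ii {R : Type*} [CommRing R] (S : Submonoid R) (h0 : (0 : R) ∉ S)
    (σ : R[X]) (hσ : σ ∈ lcS S h0) (a : R[X]) : ∃ g, a + g * σ ∈ lcS S h0 := by
  have hσ0 : σ ≠ 0 := fun h => lcS_zero S h0 (h ▸ hσ)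
  refine ⟨X ^ (a.natDegree + 1), ?_⟩
  rw [mem_lcS, leadingCoeff_add_of_degree_lt, mul_comm, leadingCoeff_mul_X_pow]
  · exact hσ
  · have : Nontrivial R := ⟨⟨0, 1, fun h => h0 (h ▸ S.one_mem)⟩⟩
    rw [mul_comm, degree_mul_X_pow, degree_eq_natDegree hσ0]
    refine lt_of_le_of_lt degree_le_natDegree ?_
    norm_cast
    omega

open Polynomial in
theorem lcS_height {R : Type*} [CommRing R] [IsNoetherianRing R] (S : Submonoid R)
    (h0 : (0 : R) ∉ S) (D : ℕ)
    (h : ∀ P : Ideal R, P.IsPrime → (∀ s ∈ S, s ∉ P) → P.height ≤ D)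
    (P : Ideal R[X]) (hP : P.IsPrime) (hd : ∀ s ∈ lcS S h0, s ∉ P) : P.height ≤ D := by
  set p : Ideal R := P.comap C with hp
  have hpp : p.IsPrime := Ideal.IsPrime.comap C
  have hlo : P.LiesOver p := ⟨rfl⟩
  have hdp : ∀ s ∈ S, s ∉ p := by
    intro s hs hsp
    exact hd (C s) (by rw [mem_lcS]; simpa using hs) hsp
  by_cases hPp : P ≤ p.map C
  · exact (Ideal.height_mono hPp).trans ((height_map_C_le p).trans (h p hpp hdp))
  -- exists f in P with leading coeff not in p
  have hf : ∃ f ∈ P, f.leadingCoeff ∉ p := by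
    by_contra hcon
    push Not at hcon
    apply hPp
    have : ∀ n : ℕ, ∀ f : R[X], f.natDegree < n → f ∈ P → f ∈ p.map C := by
      intro n
      induction n with
      | zero => intro f hf; omega
      | succ n ih =>
        intro f hfn hfP
        have hl := hcon f hfP
        have hmono : C f.leadingCoeff * X ^ f.natDegree ∈ p.map C :=
          Ideal.mul_mem_right _ _ (Ideal.mem_map_of_mem _ hl)
        have hsub : f.eraseLead ∈ P := by
          have := f.eraseLead_add_C_mul_X_pow
          have h2 : f.eraseLead = f - C f.leadingCoeff * X ^ f.natDegree := by
            rw [eq_sub_iff_add_eq]; exact this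
          rw [h2]
          exact P.sub_mem hfP (Ideal.mul_mem_right _ _ hl)
        have he : f.eraseLead ∈ p.map C := by
          by_cases h00 : f.natDegree = 0
          · have h01 : f.eraseLead = 0 := by
              rw [eq_C_of_natDegree_eq_zero h00, eraseLead_C]
            rw [h01]; exact zero_mem _
          · refine ih _ ?_ hsub
            have := eraseLead_natDegree_le f
            omega
        rw [← f.eraseLead_add_C_mul_X_pow]
        exact add_mem he hmono
    exact fun f hf => this _ f (Nat.lt_succ_self _) hf
  obtain ⟨f, hfP, hfl⟩ := hf
  have hdisj : Disjoint ((p ⊔ Ideal.span {f.leadingCoeff} : Ideal R) : Set R) (S : Set R) := by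
    rw [Set.disjoint_left]
    intro s hs hsS
    obtain ⟨m, hm, t, ht, hst⟩ := Submodule.mem_sup.mp hs
    obtain ⟨u, rfl⟩ := Ideal.mem_span_singleton'.mp ht
    have hmem : C u * f + C m * X ^ f.natDegree ∈ P :=
      add_mem (P.mul_mem_left _ hfP) (Ideal.mul_mem_right _ _ hm)
    refine hd _ ?_ hmem
    have hc : (C u * f + C m * X ^ f.natDegree).coeff f.natDegree = s := by
      simp [← hst, add_comm]
    have hs0 : s ≠ 0 := fun h => h0 (h ▸ hsS)
    have hdeg : (C u * f + C m * X ^ f.natDegree).natDegree = f.natDegree := by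
      refine le_antisymm ?_ (le_natDegree_of_ne_zero (by rw [hc]; exact hs0))
      refine natDegree_add_le_of_degree_le (natDegree_C_mul_le _ _) (natDegree_C_mul_X_pow_le _ _)
    rw [mem_lcS, leadingCoeff, hdeg, hc]
    exact hsS
  obtain ⟨p', hp', hle, hdj⟩ := Ideal.exists_le_prime_disjoint _ _ hdisj
  have hlt : p < p' := by
    refine lt_of_le_of_ne (le_sup_left.trans hle) ?_
    intro heq
    exact hfl (heq ▸ hle (Ideal.mem_sup_right (Ideal.mem_span_singleton_self _)))
  have h1 := height_poly_le p P
  have h2 := Ideal.height_add_one_le_of_lt_of_isPrime hlt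
  exact h1.trans (h2.trans (h p' hp' fun s hs hsp => Set.disjoint_left.mp hdj hsp hs))

open Polynomial in
theorem monic_subst {A B : Type*} [CommRing A] [Nontrivial A] [CommRing B] (ψ : B →+* A[X])
    (f : B[X]) (hf : (ψ f.leadingCoeff).Monic) (x : A) :
    ∃ m : ℕ, (f.eval₂ ψ (X * (C x + X ^ m - 1))).Monic := by
  set E := (Finset.range f.natDegree).sup fun k => (ψ (f.coeff k)).natDegree with hE
  refine ⟨E + 1, ?_⟩
  set Φ : A[X] := X * (C x + X ^ (E + 1) - 1) with hΦ
  have hΦ1 : (C x + X ^ (E + 1) - 1 : A[X]) = X ^ (E + 1) + C (x - 1) := by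
    simp; ring
  have hm1 : (X ^ (E + 1) + C (x - 1) : A[X]).Monic := monic_X_pow_add_C _ (by omega)
  have hΦm : Φ.Monic := by rw [hΦ, hΦ1]; exact monic_X.mul hm1
  have hΦd : Φ.natDegree = E + 2 := by
    rw [hΦ, hΦ1, monic_X.natDegree_mul hm1, natDegree_X, natDegree_X_pow_add_C]; ring
  rw [eval₂_eq_sum_range, Finset.sum_range_succ, add_comm]
  have hlm : (ψ (f.coeff f.natDegree) * Φ ^ f.natDegree).Monic := hf.mul (hΦm.pow _)
  refine hlm.add_of_left ?_
  have hd : (ψ (f.coeff f.natDegree) * Φ ^ f.natDegree).degree =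
      ((ψ (f.coeff f.natDegree)).natDegree + f.natDegree * (E + 2) : ℕ) := by
    have hf' : (ψ (f.coeff f.natDegree)).Monic := hf
    rw [degree_eq_natDegree hlm.ne_zero, Monic.natDegree_mul hf' (hΦm.pow _), hΦm.natDegree_pow, hΦd]
  rw [hd]
  refine lt_of_le_of_lt (degree_sum_le _ _) ?_
  rw [Finset.sup_lt_iff (WithBot.bot_lt_coe _)]
  intro k hk
  refine lt_of_le_of_lt degree_le_natDegree ?_
  have h1 : (ψ (f.coeff k)).natDegree ≤ E :=
    Finset.le_sup (f := fun k => (ψ (f.coeff k)).natDegree) hk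
  have h2 : (ψ (f.coeff k) * Φ ^ k).natDegree ≤ E + k * (E + 2) := by
    refine natDegree_mul_le.trans (add_le_add h1 ?_)
    rw [hΦm.natDegree_pow, hΦd]
  have hk' : k + 1 ≤ f.natDegree := Finset.mem_range.mp hk
  have h3 : (k + 1) * (E + 2) ≤ f.natDegree * (E + 2) := Nat.mul_le_mul_right _ hk'
  norm_cast
  nlinarith

universe u v
open Polynomial in
theorem exists_lexMonic (K : Type u) [CommRing K] [Nontrivial K] [IsNoetherianRing K] (D : ℕ)
    (hD : ∀ P : Ideal K, P.IsPrime → P.height ≤ D) (A : Type v) [CommRing A] [Nontrivial A]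
    [Algebra K A] (n : ℕ) :
    ∃ S : Submonoid (MvPolynomial (Fin n) K), (0 : MvPolynomial (Fin n) K) ∉ S ∧
      (∀ P : Ideal (MvPolynomial (Fin n) K), P.IsPrime → (∀ s ∈ S, s ∉ P) → P.height ≤ D) ∧
      (∀ σ ∈ S, ∀ a, ∃ g, a + g * σ ∈ S) ∧
      (∀ g ∈ S, ∀ x : Fin n → A, ∃ m : Fin n → ℕ,
        (MvPolynomial.aeval (R := K) (fun i => (X * (C (x i) + X ^ (m i) - 1) : A[X])) g).Monic) := by
  induction n with
  | zero =>
    refine ⟨⊥, ?_, ?_, ?_, ?_⟩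
    · simp
    · intro P hP _
      have := hD _ (Ideal.IsPrime.comap (MvPolynomial.isEmptyAlgEquiv K (Fin 0)).symm.toRingEquiv (K := P))
      rwa [RingEquiv.height_comap] at this
    · intro σ hσ a
      rw [Submonoid.mem_bot] at hσ
      exact ⟨1 - a, by simp [hσ]⟩
    · intro g hg x
      rw [Submonoid.mem_bot] at hg
      exact ⟨fun _ => 0, by simp [hg]⟩
  | succ n ih =>
    obtain ⟨S, h0, h1, h2, h3⟩ := ih
    set e := MvPolynomial.finSuccEquiv K n with he
    refine ⟨(lcS S h0).comap e.toRingEquiv.toRingHom, ?_, ?_, ?_, ?_⟩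
    · intro h
      rw [Submonoid.mem_comap] at h
      exact lcS_zero S h0 (by simpa using h)
    · intro P hP hdis
      have hP' : (P.comap e.symm.toRingEquiv).IsPrime := Ideal.IsPrime.comap _
      have := lcS_height S h0 D h1 (P.comap e.symm.toRingEquiv) hP' (by
        intro s hs hsP
        refine hdis (e.symm s) ?_ hsP
        rw [Submonoid.mem_comap]
        simpa using hs)
      rwa [RingEquiv.height_comap] at this
    · intro σ hσ a
      obtain ⟨g, hg⟩ := lcS_ii S h0 (e σ) hσ (e a)
      refine ⟨e.symm g, ?_⟩
      rw [Submonoid.mem_comap]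
      simpa using hg
    · intro g hg x
      have hl : (e g).leadingCoeff ∈ S := hg
      obtain ⟨m, hm⟩ := h3 _ hl (fun i => x i.succ)
      obtain ⟨m0, hm0⟩ := monic_subst
        (MvPolynomial.aeval (R := K)
          (fun i => (X * (C (x i.succ) + X ^ (m i) - 1) : A[X]))).toRingHom (e g) hm (x 0)
      refine ⟨Fin.cons m0 m, ?_⟩
      convert hm0 using 1
      set φ := fun i : Fin n => (X * (C (x i.succ) + X ^ (m i) - 1) : A[X])
      have : ∀ g : MvPolynomial (Fin (n+1)) K, MvPolynomial.aeval (R := K)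
          (fun i => (X * (C (x i) + X ^ ((Fin.cons m0 m : Fin (n+1) → ℕ) i) - 1) : A[X])) g =
          (e g).eval₂ (MvPolynomial.aeval (R := K) φ).toRingHom (X * (C (x 0) + X ^ m0 - 1)) := by
        intro g
        induction g using MvPolynomial.induction_on with
        | C a =>
          rw [he, MvPolynomial.finSuccEquiv_apply]
          simp
        | add p q hp hq => simp [hp, hq, eval₂_add]
        | mul_X p i hp =>
          rw [map_mul, map_mul, eval₂_mul, hp]
          congr 1
          refine Fin.cases ?_ (fun j => ?_) i
          · simp [he, MvPolynomial.finSuccEquiv_X_zero]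
          · simp [he, MvPolynomial.finSuccEquiv_X_succ, φ]
      exact this g

/-- signed indices `±1,…,±r`. -/
abbrev Idx (r : ℕ) := Fin r × Bool

/-- negation of a signed index. -/
def ng {r : ℕ} (i : Idx r) : Idx r := (i.1, !i.2)

@[simp] theorem ng_ng {r : ℕ} (i : Idx r) : ng (ng i) = i := by simp [ng]
@[simp] theorem ng_ne {r : ℕ} (i : Idx r) : ng i ≠ i := by
  rcases i with ⟨i, _ | _⟩ <;> simp [ng]
@[simp] theorem ne_ng {r : ℕ} (i : Idx r) : i ≠ ng i := (ng_ne i).symm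
theorem ng_inj {r : ℕ} {i j : Idx r} : ng i = ng j ↔ i = j :=
  ⟨fun h => by rw [← ng_ng i, h, ng_ng], fun h => h ▸ rfl⟩
theorem ng_eq_iff {r : ℕ} {i j : Idx r} : ng i = j ↔ i = ng j :=
  ⟨fun h => by rw [← h, ng_ng], fun h => by rw [h, ng_ng]⟩
@[simp] theorem ng_true {r : ℕ} (i : Fin r) : ng (i, true) = (i, false) := rfl
@[simp] theorem ng_false {r : ℕ} (i : Fin r) : ng (i, false) = (i, true) := rfl

/-- action of an elementary transvection on a column. -/
def opE {r : ℕ} {R : Type*} [CommRing R] (i j : Idx r) (ξ : R) (b : Idx r → R) : Idx r → R :=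
  fun k => b k + (if k = i then ξ * b j else 0) - (if k = ng j then ξ * b (ng i) else 0)

/-- the split form. -/
def qf {r : ℕ} {R : Type*} [CommRing R] (b : Idx r → R) : R :=
  ∑ j : Fin r, b (j, true) * b (j, false)

/-- polar form. -/
def bf {r : ℕ} {R : Type*} [CommRing R] (b v : Idx r → R) : R :=
  ∑ k : Idx r, b k * v (ng k)

theorem qf_add {r : ℕ} {R : Type*} [CommRing R] (b v : Idx r → R) :
    qf (b + v) = qf b + bf b v + qf v := by
  simp only [qf, bf, Pi.add_apply, Fintype.sum_prod_type, Fintype.univ_bool, ← Finset.sum_add_distrib]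
  refine Finset.sum_congr rfl fun j _ => ?_
  rw [Finset.sum_pair (by simp)]
  simp only [ng_true, ng_false]
  ring

inductive Reach {r : ℕ} {R : Type*} [CommRing R] : ℕ → (Idx r → R) → (Idx r → R) → Prop
  | refl (k : ℕ) (b : Idx r → R) : Reach k b b
  | step (k : ℕ) (b c : Idx r → R) (i j : Idx r) (ξ : R) (h1 : i ≠ j) (h2 : i ≠ ng j)
      (h : Reach k (opE i j ξ b) c) : Reach (k + 1) b c

section
variable {r : ℕ} {R : Type*} [CommRing R]

theorem opE_inv (i j : Idx r) (ξ : R) (h1 : i ≠ j) (b : Idx r → R) :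
    opE i j (-ξ) (opE i j ξ b) = b := by
  ext k
  have h3 : ng i ≠ ng j := fun h => h1 (ng_inj.mp h)
  simp only [opE, if_neg h1.symm, ne_ng, if_false, ng_ne, if_neg h3]
  split_ifs <;> ring

theorem qf_opE (i j : Idx r) (ξ : R) (h1 : i ≠ j) (h2 : i ≠ ng j) (b : Idx r → R) :
    qf (opE i j ξ b) = qf b := by
  have h : opE i j ξ b = b + fun k => (if k = i then ξ * b j else 0) -
      (if k = ng j then ξ * b (ng i) else 0) := by
    ext k; simp only [opE, Pi.add_apply]; ring
  rw [h, qf_add]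
  have hb : bf b (fun k => (if k = i then ξ * b j else 0) -
      (if k = ng j then ξ * b (ng i) else 0)) = 0 := by
    simp only [bf, ng_eq_iff, mul_sub, mul_ite, mul_zero, Finset.sum_sub_distrib,
      Finset.sum_ite_eq', Finset.mem_univ, if_true, ng_ng]
    ring
  have hq : qf (fun k => (if k = i then ξ * b j else 0) -
      (if k = ng j then ξ * b (ng i) else 0)) = 0 := by
    refine Finset.sum_eq_zero fun k _ => ?_
    rcases i with ⟨i, si⟩
    rcases j with ⟨j, sj⟩
    simp only [ng, Prod.mk.injEq, ne_eq] at *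
    rcases si with _ | _ <;> rcases sj with _ | _ <;> simp at * <;>
    · intro h h'; subst h; subst h'; simp_all
  rw [hb, hq]; ring

theorem opE_mem (i j : Idx r) (ξ : R) (b : Idx r → R) (I : Ideal R) (h : ∀ k, b k ∈ I) (k : Idx r) :
    opE i j ξ b k ∈ I := by
  unfold opE
  refine I.sub_mem (I.add_mem (h k) ?_) ?_
  · split_ifs
    exacts [I.mul_mem_left _ (h _), I.zero_mem]
  · split_ifs
    exacts [I.mul_mem_left _ (h _), I.zero_mem]

theorem Reach.mono {k l : ℕ} {b c : Idx r → R} (h : Reach k b c) (hkl : k ≤ l) : Reach l b c := by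
  induction h generalizing l with
  | refl k b => exact Reach.refl _ _
  | step k b c i j ξ h1 h2 h ih =>
    obtain ⟨l, rfl⟩ : ∃ m, l = m + 1 := ⟨l - 1, by omega⟩
    exact Reach.step _ _ _ i j ξ h1 h2 (ih (by omega))

theorem Reach.trans {k l : ℕ} {b c d : Idx r → R} (h : Reach k b c) (h' : Reach l c d) :
    Reach (k + l) b d := by
  induction h with
  | refl k b => exact h'.mono (by omega)
  | step k b c i j ξ h1 h2 h ih =>
    have := Reach.step _ _ _ i j ξ h1 h2 (ih h')
    exact this.mono (by omega)

theorem Reach.one (i j : Idx r) (ξ : R) (h1 : i ≠ j) (h2 : i ≠ ng j) (b : Idx r → R) :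
    Reach 1 b (opE i j ξ b) := Reach.step 0 _ _ i j ξ h1 h2 (Reach.refl _ _)

theorem Reach.symm {k : ℕ} {b c : Idx r → R} (h : Reach k b c) : Reach k c b := by
  induction h with
  | refl k b => exact Reach.refl _ _
  | step k b c i j ξ h1 h2 h ih =>
    have := Reach.one i j (-ξ) h1 h2 (opE i j ξ b)
    rw [opE_inv i j ξ h1] at this
    exact ih.trans this

theorem Reach.qf_eq {k : ℕ} {b c : Idx r → R} (h : Reach k b c) : qf c = qf b := by
  induction h with
  | refl k b => rfl
  | step k b c i j ξ h1 h2 h ih => rw [ih, qf_opE i j ξ h1 h2]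

theorem Reach.mem {k : ℕ} {b c : Idx r → R} (h : Reach k b c) (I : Ideal R) (hI : ∀ k, b k ∈ I) :
    ∀ k, c k ∈ I := by
  induction h with
  | refl k b => exact hI
  | step k b c i j ξ h1 h2 h ih => exact ih (opE_mem i j ξ b I hI)

theorem Reach.map {R' : Type*} [CommRing R'] (φ : R →+* R') {k : ℕ} {b c : Idx r → R}
    (h : Reach k b c) : Reach k (fun i => φ (b i)) (fun i => φ (c i)) := by
  induction h with
  | refl k b => exact Reach.refl _ _
  | step k b c i j ξ h1 h2 h ih =>
    refine Reach.step _ _ _ i j (φ ξ) h1 h2 ?_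
    convert ih using 1
    ext k
    simp only [opE, map_sub, map_add]
    congr 1
    · congr 1
      split_ifs <;> simp
    · split_ifs <;> simp

/-- result of a column operation. -/
def colRes (i : Idx r) (J : Finset (Idx r)) (c : Idx r → R) (b : Idx r → R) : Idx r → R :=
  fun k => if k = ng i then b k - ∑ j ∈ J, c j * b (ng j)
    else if k ∈ J then b k + c k * b i else b k

theorem reach_col (i : Idx r) (J : Finset (Idx r)) (c : Idx r → R) (b : Idx r → R)
    (hJ : ∀ j ∈ J, j ≠ i ∧ j ≠ ng i ∧ ng j ∉ J) : Reach J.card b (colRes i J c b) := by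
  induction J using Finset.induction_on with
  | empty =>
    have h0 : colRes i ∅ c b = b := by ext k; simp [colRes]
    rw [h0]; exact Reach.refl _ _
  | insert j J hj ih =>
    have ih' := ih (fun l hl => by
      have := hJ l (Finset.mem_insert_of_mem hl)
      exact ⟨this.1, this.2.1, fun h => this.2.2 (Finset.mem_insert_of_mem h)⟩)
    obtain ⟨hj1, hj2, hj3⟩ := hJ j (Finset.mem_insert_self _ _)
    rw [Finset.card_insert_of_notMem hj]
    convert ih'.trans (Reach.one j i (c j) hj1 hj2 _) using 1
    have hnj : ng j ∉ J := fun h => hj3 (Finset.mem_insert_of_mem h)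
    have hiJ : i ∉ J := fun h => (hJ i (Finset.mem_insert_of_mem h)).1 rfl
    have hne : ng j ≠ ng i := fun h => hj1 (ng_inj.mp h)
    ext k
    simp only [opE, colRes, Finset.sum_insert hj, Finset.mem_insert, if_neg hne, if_neg hnj,
      ne_ng, if_false, hiJ]
    by_cases hk : k = ng i
    · subst hk
      simp only [if_true, if_neg (Ne.symm hj2)]
      ring
    · simp only [if_neg hk]
      by_cases hkj : k = j
      · subst hkj
        simp [hj]
      · simp [hkj]

/-- result of a row operation. -/
def rowRes (i : Idx r) (J : Finset (Idx r)) (c : Idx r → R) (b : Idx r → R) : Idx r → R :=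
  fun k => if k = i then b k + ∑ j ∈ J, c j * b j
    else if ng k ∈ J then b k - c (ng k) * b (ng i) else b k

theorem reach_row (i : Idx r) (J : Finset (Idx r)) (c : Idx r → R) (b : Idx r → R)
    (hJ : ∀ j ∈ J, j ≠ i ∧ j ≠ ng i ∧ ng j ∉ J) : Reach J.card b (rowRes i J c b) := by
  have hinj : Function.Injective (ng : Idx r → Idx r) := fun _ _ h => ng_inj.mp h
  have hmem : ∀ k, k ∈ J.image ng ↔ ng k ∈ J := by
    intro k
    rw [Finset.mem_image]
    exact ⟨fun ⟨a, ha, hk⟩ => by rw [← hk, ng_ng]; exact ha, fun h => ⟨_, h, ng_ng k⟩⟩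
  have h := reach_col (ng i) (J.image ng) (fun k => - c (ng k)) b (by
    intro j hj
    rw [hmem] at hj
    obtain ⟨h1, h2, h3⟩ := hJ _ hj
    refine ⟨fun h => h1 (by rw [h, ng_ng]), fun h => h2 (by rw [h, ng_ng]), ?_⟩
    rw [hmem]; exact h3)
  rw [Finset.card_image_of_injective _ hinj] at h
  convert h using 1
  ext k
  simp only [rowRes, colRes, ng_ng, hmem]
  rw [Finset.sum_image (fun _ _ _ _ h => hinj h)]
  simp only [ng_ng]
  split_ifs with h1 h2
  · simp
  · ring
  · rfl

/-- translation to positions. -/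
def posE (r : ℕ) (i : Idx r) : Fin (2 * r) :=
  if i.2 then ⟨i.1.val, by omega⟩ else ⟨2 * r - 1 - i.1.val, by omega⟩

theorem posE_inj (r : ℕ) : Function.Injective (posE r) := by
  rintro ⟨i, _ | _⟩ ⟨j, _ | _⟩ h <;> simp [posE, Fin.ext_iff] at h ⊢ <;> omega

theorem posE_ng (r : ℕ) (i : Idx r) : posE r (ng i) = negE r (posE r i) := by
  rcases i with ⟨i, _ | _⟩ <;> simp [posE, negE, ng, Fin.ext_iff]
  omega

theorem posE_surj (r : ℕ) : Function.Surjective (posE r) := by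
  intro k
  by_cases h : k.val < r
  · exact ⟨(⟨k.val, h⟩, true), by simp [posE]⟩
  · refine ⟨(⟨2 * r - 1 - k.val, by omega⟩, false), ?_⟩
    simp [posE, Fin.ext_iff]; omega

theorem TE_mulVec (i j : Idx r) (ξ : R) (b : Fin (2 * r) → R) (k : Idx r) :
    (TE r (posE r i) (posE r j) ξ).mulVec b (posE r k) = opE i j ξ (fun l => b (posE r l)) k := by
  simp only [TE, opE, Matrix.sub_mulVec, Matrix.add_mulVec, Matrix.one_mulVec, Matrix.smul_mulVec,
    Pi.sub_apply, Pi.add_apply, Pi.smul_apply, smul_eq_mul, ← posE_ng]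
  rw [Matrix.single_mulVec, Matrix.single_mulVec]
  simp only [Function.update_apply, Pi.zero_apply, (posE_inj r).eq_iff, one_mul, mul_ite, mul_zero]

theorem Reach.toEOE {k : ℕ} {b c : Idx r → R} (h : Reach k b c) :
    ∀ b' : Fin (2 * r) → R, (b = fun i => b' (posE r i)) →
      ∃ E ∈ EOE r k R, (fun i => E.mulVec b' (posE r i)) = c := by
  induction h with
  | refl k b => exact fun b' hb => ⟨1, ⟨[], by simp, by simp, by simp⟩, by simp [hb]⟩
  | step k b c i j ξ h1 h2 h ih =>
    intro b' hb
    obtain ⟨E, ⟨L, hL1, hL2, rfl⟩, hE⟩ := ih ((TE r (posE r i) (posE r j) ξ).mulVec b') (by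
      ext k; rw [TE_mulVec, hb])
    refine ⟨L.prod * TE r (posE r i) (posE r j) ξ, ⟨L ++ [TE r (posE r i) (posE r j) ξ], ?_, ?_, ?_⟩, ?_⟩
    · simp; omega
    · intro m hm
      rw [List.mem_append, List.mem_singleton] at hm
      rcases hm with hm | rfl
      · exact hL2 m hm
      · refine ⟨_, _, ξ, fun h => h1 (posE_inj r h), ?_, rfl⟩
        rw [← posE_ng]
        exact fun h => h2 (posE_inj r h)
    · simp
    · rw [← hE]
      ext k
      rw [Matrix.mulVec_mulVec]

theorem quadE_eq (b : Fin (2 * r) → R) : quadE r b = qf (fun i => b (posE r i)) := by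
  simp [quadE, qf, posE]
end

/-- indices of sign `s` different from `±o`. -/
def Jb {r : ℕ} (o : Fin r) (s : Bool) : Finset (Idx r) :=
  Finset.univ.filter (fun k => k.1 ≠ o ∧ k.2 = s)

@[simp] theorem mem_Jb {r : ℕ} (o : Fin r) (s : Bool) (k : Idx r) :
    k ∈ Jb o s ↔ k.1 ≠ o ∧ k.2 = s := by simp [Jb]

theorem card_Jb {r : ℕ} (o : Fin r) (s : Bool) : (Jb o s).card = r - 1 := by
  have : Jb o s = (Finset.univ.erase o).image (fun k => (k, s)) := by
    ext ⟨k, t⟩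
    simp only [mem_Jb, Finset.mem_image, Finset.mem_erase, Finset.mem_univ, and_true,
      Prod.mk.injEq]
    constructor
    · rintro ⟨h1, h2⟩
      exact ⟨k, h1, rfl, h2.symm⟩
    · rintro ⟨a, h1, rfl, h2⟩
      exact ⟨h1, h2.symm⟩
  rw [this, Finset.card_image_of_injective _ (fun a b h => by simpa using h), Finset.card_erase_of_mem (Finset.mem_univ _), Finset.card_univ,
    Fintype.card_fin]

theorem Jb_ok {r : ℕ} (o : Fin r) (s t : Bool) :
    ∀ j ∈ Jb o s, j ≠ (o, t) ∧ j ≠ ng (o, t) ∧ ng j ∉ Jb o s := by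
  rintro ⟨j, u⟩ hj
  rw [mem_Jb] at hj
  obtain ⟨h1, h2⟩ := hj
  simp only at h1 h2
  subst h2
  refine ⟨?_, ?_, ?_⟩ <;> simp [ng, h1]

section
variable {r : ℕ} {R : Type*} [CommRing R]

theorem idx_cases (o : Fin r) (k : Idx r) :
    k = (o, true) ∨ k = (o, false) ∨ k ∈ Jb o true ∨ k ∈ Jb o false := by
  rcases k with ⟨k, _ | _⟩ <;> by_cases h : k = o <;> simp [h]

theorem meetS (S : Submonoid R) (I : Ideal R)
    (h : ∀ P : Ideal R, P.IsPrime → (∀ s ∈ S, s ∉ P) → I ≤ P → False) : ∃ g ∈ S, g ∈ I := by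
  by_contra hcon
  push Not at hcon
  obtain ⟨P, hP, hle, hd⟩ := Ideal.exists_le_prime_disjoint I S
    (Set.disjoint_left.mpr fun x hx hxS => hcon x hxS hx)
  exact h P hP (fun s hs hsP => Set.disjoint_left.mp hd hsP hs) hle

theorem mem_span_img (J : Finset (Idx r)) (b : Idx r → R) (x : R)
    (hx : x ∈ Ideal.span (b '' (J : Set (Idx r)))) : ∃ h : Idx r → R, ∑ j ∈ J, h j * b j = x := by
  obtain ⟨h, hh⟩ := (Submodule.mem_span_image_finset_iff_exists_fun' R).mp hx
  exact ⟨h, by simpa using hh⟩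

theorem SU_lemma [IsNoetherianRing R] (o : Fin r) (S : Submonoid R) (D : ℕ) (hD : D + 2 ≤ r)
    (hS : ∀ P : Ideal R, P.IsPrime → (∀ s ∈ S, s ∉ P) → P.height ≤ D)
    (hii : ∀ σ ∈ S, ∀ a, ∃ g, a + g * σ ∈ S) (b : Idx r → R)
    (hb : ∀ P : Ideal R, P.IsPrime → (∀ k, b k ∈ P) → False) :
    ∃ c, Reach (4 * (r - 1)) b c ∧ ∃ g ∈ S, g ∈ Ideal.span (c '' (Jb o true : Set (Idx r))) := by
  have SR : ∀ (s : Bool) (a : Idx r → R) (a0 : R), ∃ c : Idx r → R, ∀ P : Ideal R, P.IsPrime →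
      (∀ s ∈ S, s ∉ P) → (∀ k ∈ Jb o s, a k + c k * a0 ∈ P) → a0 ∈ P := by
    intro s a a0
    obtain ⟨c, hc⟩ := SR_lemma (Jb o s) a a0
    refine ⟨c, fun P hP hd hk => ?_⟩
    rcases hc P hP hk with h | h
    · exact h
    · have := h.trans (hS P hP hd)
      rw [card_Jb] at this
      norm_cast at this
      omega
  -- step 1
  obtain ⟨c1, hc1⟩ := SR false b (b (o, true))
  have hR1 := reach_col (o, true) (Jb o false) c1 b (Jb_ok o false true)
  set b1 := colRes (o, true) (Jb o false) c1 b with hb1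
  obtain ⟨σ, hσS, hσ⟩ := meetS S (Ideal.span (b1 '' ({(o, false)} ∪ (Jb o true : Set (Idx r)))) ⊔
      Ideal.span (b1 '' (Jb o false : Set (Idx r)))) (by
    intro P hP hd hle
    have hall : ∀ k, k ≠ (o, true) → b1 k ∈ P := by
      intro k hk
      rcases idx_cases o k with h | h | h | h
      · exact absurd h hk
      · exact hle (Ideal.mem_sup_left (Ideal.subset_span ⟨k, by simp [h], rfl⟩))
      · exact hle (Ideal.mem_sup_left (Ideal.subset_span ⟨k, Or.inr h, rfl⟩))
      · exact hle (Ideal.mem_sup_right (Ideal.subset_span ⟨k, h, rfl⟩))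
    have hto : b1 (o, true) = b (o, true) := by simp [hb1, colRes]
    have h1 : b (o, true) ∈ P := by
      refine hc1 P hP hd fun k hk => ?_
      have h2 := hall k (Jb_ok o false true k hk).1
      rw [hb1, colRes, if_neg (Jb_ok o false true k hk).2.1, if_pos hk] at h2
      exact h2
    refine hb P hP (hR1.symm.mem P fun k => ?_)
    by_cases hk : k = (o, true)
    · rw [hk, hto]; exact h1
    · exact hall k hk)
  obtain ⟨x, hx, y, hy, hxy⟩ := Submodule.mem_sup.mp hσ
  obtain ⟨h, hh⟩ := mem_span_img _ _ _ hy
  -- step 2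
  obtain ⟨g, hg⟩ := hii σ hσS (b1 (o, true))
  have hR2 := reach_row (o, true) (Jb o false) (fun k => g * h k) b1 (Jb_ok o false true)
  set b2 := rowRes (o, true) (Jb o false) (fun k => g * h k) b1 with hb2
  have C2 : ∀ P : Ideal R, P.IsPrime → (∀ s ∈ S, s ∉ P) → b2 (o, false) ∈ P →
      (∀ k ∈ Jb o true, b2 k ∈ P) → b2 (o, true) ∉ P := by
    intro P hP hd h0 hk ht
    have e0 : b2 (o, false) = b1 (o, false) := by simp [hb2, rowRes]
    rw [e0] at h0
    have hxP : x ∈ P := by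
      refine (Ideal.span_le.mpr ?_) hx
      rintro _ ⟨k, hk' | hk', rfl⟩
      · rw [Set.mem_singleton_iff.mp hk']; exact h0
      · have h3 := hk k hk'
        have hk2 : k.1 ≠ o ∧ k.2 = true := (mem_Jb _ _ _).mp hk'
        rw [hb2, rowRes, if_neg (by rintro rfl; exact hk2.1 rfl), if_pos (by simp [ng, hk2])] at h3
        exact (P.sub_mem_iff_left (P.mul_mem_left _ h0)).mp h3
    have e1 : b2 (o, true) = (b1 (o, true) + g * σ) - g * x := by
      rw [hb2, rowRes, if_pos rfl]
      simp only [mul_assoc, ← Finset.mul_sum, hh, ← hxy]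
      ring
    rw [e1, P.sub_mem_iff_left (P.mul_mem_left _ hxP)] at ht
    exact hd _ hg ht
  -- step 3
  obtain ⟨c3, hc3⟩ := SR true b2 (b2 (o, false) * b2 (o, false))
  have hR3 := reach_col (o, false) (Jb o true) (fun k => c3 k * b2 (o, false)) b2 (Jb_ok o true false)
  set b3 := colRes (o, false) (Jb o true) (fun k => c3 k * b2 (o, false)) b2 with hb3
  have C3 : ∀ P : Ideal R, P.IsPrime → (∀ s ∈ S, s ∉ P) →
      (∀ k ∈ Jb o true, b3 k ∈ P) → b3 (o, true) ∉ P := by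
    intro P hP hd hk ht
    have ek : ∀ k ∈ Jb o true, b2 k + c3 k * (b2 (o, false) * b2 (o, false)) ∈ P := by
      intro k hk'
      have h3 := hk k hk'
      rw [hb3, colRes, if_neg (Jb_ok o true false k hk').2.1, if_pos hk'] at h3
      rwa [← mul_assoc]
    have h0 : b2 (o, false) ∈ P := by
      rcases hP.mem_or_mem (hc3 P hP hd ek) with h | h <;> exact h
    refine C2 P hP hd h0 (fun k hk' => ?_) ?_
    · exact (Ideal.add_mem_iff_left _ (P.mul_mem_left _ (P.mul_mem_left _ h0))).mp (ek k hk')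
    · rw [hb3, colRes, if_pos (by simp)] at ht
      refine (P.sub_mem_iff_left (P.sum_mem fun j _ => ?_)).mp ht
      exact P.mul_mem_right _ (P.mul_mem_left _ h0)
  -- step 4
  obtain ⟨c4, hc4⟩ := SR true b3 (b3 (o, true))
  have hR4 := reach_col (o, true) (Jb o true) c4 b3 (Jb_ok o true true)
  set b4 := colRes (o, true) (Jb o true) c4 b3 with hb4
  rw [card_Jb] at hR1 hR2 hR3 hR4
  refine ⟨b4, (((hR1.trans hR2).trans hR3).trans hR4).mono (by omega), meetS S _ ?_⟩
  intro P hP hd hle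
  have ek : ∀ k ∈ Jb o true, b3 k + c4 k * b3 (o, true) ∈ P := by
    intro k hk'
    have h3 := hle (Ideal.subset_span ⟨k, hk', rfl⟩)
    rwa [hb4, colRes, if_neg (Jb_ok o true true k hk').2.1, if_pos hk'] at h3
  have h1 := hc4 P hP hd ek
  refine C3 P hP hd (fun k hk' => ?_) h1
  exact (Ideal.add_mem_iff_left _ (P.mul_mem_left _ h1)).mp (ek k hk')

theorem Base_lemma [IsNoetherianRing R] (o : Fin r) (D : ℕ) (hD : D + 2 ≤ r)
    (hS : ∀ P : Ideal R, P.IsPrime → P.height ≤ D) (b : Idx r → R)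
    (hb : ∀ P : Ideal R, P.IsPrime → (∀ k, b k ∈ P) → False) (hq : qf b = 0) :
    Reach (7 * (r - 1)) b (fun k => if k = (o, true) then 1 else 0) := by
  obtain ⟨c, hR, g, hg, hgs⟩ := SU_lemma o ⊥ D hD (fun P hP _ => hS P hP)
    (fun σ hσ a => ⟨1 - a, by rw [Submonoid.mem_bot] at hσ; simp [hσ]⟩) b hb
  rw [Submonoid.mem_bot] at hg
  subst hg
  obtain ⟨h, hh⟩ := mem_span_img _ _ _ hgs
  have hR1 := reach_row (o, true) (Jb o true) (fun k => (1 - c (o, true)) * h k) c (Jb_ok o true true)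
  set b1 := rowRes (o, true) (Jb o true) (fun k => (1 - c (o, true)) * h k) c with hb1
  have e1 : b1 (o, true) = 1 := by
    rw [hb1, rowRes, if_pos rfl]
    simp only [mul_assoc, ← Finset.mul_sum, hh]
    ring
  have hR2 := reach_col (o, true) (Jb o true) (fun k => - b1 k) b1 (Jb_ok o true true)
  set b2 := colRes (o, true) (Jb o true) (fun k => - b1 k) b1 with hb2
  have e2 : b2 (o, true) = 1 := by rw [hb2, colRes, if_neg (by simp), if_neg (by simp), e1]
  have hR3 := reach_col (o, true) (Jb o false) (fun k => - b2 k) b2 (Jb_ok o false true)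
  set b3 := colRes (o, true) (Jb o false) (fun k => - b2 k) b2 with hb3
  have e3 : b3 (o, true) = 1 := by rw [hb3, colRes, if_neg (by simp), if_neg (by simp), e2]
  have f2 : ∀ k ∈ Jb o true, b2 k = 0 := by
    intro k hk
    rw [hb2, colRes, if_neg (Jb_ok o true true k hk).2.1, if_pos hk, e1]; ring
  have f3 : ∀ k ∈ Jb o true, b3 k = 0 := by
    intro k hk
    rw [hb3, colRes, if_neg (Jb_ok o true true k hk).2.1, if_neg, f2 k hk]
    rw [mem_Jb] at hk ⊢
    simp [hk]
  have f3' : ∀ k ∈ Jb o false, b3 k = 0 := by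
    intro k hk
    rw [hb3, colRes, if_neg (Jb_ok o false true k hk).2.1, if_pos hk, e2]; ring
  have hRR := ((hR.trans hR1).trans hR2).trans hR3
  have hq3 := hRR.qf_eq
  rw [hq, qf, Finset.sum_eq_single o, e3, one_mul] at hq3
  · have : b3 = (fun k => if k = (o, true) then 1 else 0) := by
      ext k
      rcases idx_cases o k with h | h | h | h
      · simp [h, e3]
      · simp [h, hq3]
      · rw [f3 k h, if_neg (Jb_ok o true true k h).1]
      · rw [f3' k h, if_neg (Jb_ok o false true k h).1]
    rw [← this]
    rw [card_Jb, card_Jb] at hRR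
    exact hRR.mono (by omega)
  · intro j _ hj
    rw [f3 (j, true) (by simp [hj]), zero_mul]
  · simp
end

section
variable {r : ℕ} {R : Type*} [CommRing R]

theorem tri (a1 a2 a3 : Fin r) (h12 : a1 ≠ a2) (h13 : a1 ≠ a3) (h23 : a2 ≠ a3) (s : Bool)
    (p1 p2 p3 : R) (b : Idx r → R) : ∃ c, Reach 3 b c ∧
      c (a1, s) = b (a1, s) - (p2 * b (a3, !s) - p3 * b (a2, !s)) ∧
      c (a2, s) = b (a2, s) - (p3 * b (a1, !s) - p1 * b (a3, !s)) ∧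
      c (a3, s) = b (a3, s) - (p1 * b (a2, !s) - p2 * b (a1, !s)) ∧
      ∀ k, k ≠ (a1, s) → k ≠ (a2, s) → k ≠ (a3, s) → c k = b k := by
  have H1 := Reach.one (a1, s) (a2, !s) p3 (by simp [h12]) (by simp [ng, h12]) b
  set b1 := opE (a1, s) (a2, !s) p3 b with hb1
  have H2 := Reach.one (a2, s) (a3, !s) p1 (by simp [h23]) (by simp [ng, h23]) b1
  set b2 := opE (a2, s) (a3, !s) p1 b1 with hb2
  have H3 := Reach.one (a3, s) (a1, !s) p2 (by simp [h13.symm]) (by simp [ng, h13.symm]) b2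
  refine ⟨_, (H1.trans H2).trans H3, ?_, ?_, ?_, ?_⟩
  · simp [hb1, hb2, opE, ng, h12, h13, h23, h12.symm, h13.symm, h23.symm]; ring
  · simp [hb1, hb2, opE, ng, h12, h13, h23, h12.symm, h13.symm, h23.symm]; ring
  · simp [hb1, hb2, opE, ng, h12, h13, h23, h12.symm, h13.symm, h23.symm]; ring
  · intro k k1 k2 k3
    simp [hb1, hb2, opE, ng, k1, k2, k3]

theorem nine (a1 a2 a3 : Fin r) (h12 : a1 ≠ a2) (h13 : a1 ≠ a3) (h23 : a2 ≠ a3)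
    (b b' : Idx r → R) (s η u v : R) (z : Idx r → R)
    (hz : ∀ j, b' j = b j + s ^ 3 * η * z j)
    (hs : u * b (a1, true) + v * b (a2, true) = s) :
    ∃ c, Reach 9 b c ∧ c (a1, true) = b' (a1, true) ∧ c (a2, true) = b' (a2, true) ∧
      ∃ e : Idx r → R, ∀ j, b' j = c j + s * (η * e j) := by
  obtain ⟨b3, hb3⟩ : ∃ x, x = b (a3, true) := ⟨_, rfl⟩
  obtain ⟨p1, hp1⟩ : ∃ x, x = (1 - b3) * u := ⟨_, rfl⟩
  obtain ⟨p2, hp2⟩ : ∃ x, x = (1 - b3) * v := ⟨_, rfl⟩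
  obtain ⟨w1, hw1⟩ : ∃ x, x = -(s ^ 2 * η * z (a1, true)) := ⟨_, rfl⟩
  obtain ⟨w2, hw2⟩ : ∃ x, x = -(s ^ 2 * η * z (a2, true)) := ⟨_, rfl⟩
  obtain ⟨w3, hw3⟩ : ∃ x, x = (1 - b3) * (s * η) * (u * z (a1, true) + v * z (a2, true)) :=
    ⟨_, rfl⟩
  obtain ⟨c, hc, c1, c2, c3, ck⟩ := tri a1 a2 a3 h12 h13 h23 true p1 p2 s b
  obtain ⟨d, hd, d1, d2, d3, dk⟩ := tri a1 a2 a3 h12 h13 h23 false w1 w2 w3 c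
  obtain ⟨f, hf, f1, f2, f3, fk⟩ := tri a1 a2 a3 h12 h13 h23 true (-p1) (-p2) (-s) d
  simp only [Bool.not_true, Bool.not_false] at c1 c2 c3 d1 d2 d3 f1 f2 f3
  have ckf : ∀ a, c (a, false) = b (a, false) := fun a => ck _ (by simp) (by simp) (by simp)
  have dkt : ∀ a, d (a, true) = c (a, true) := fun a => dk _ (by simp) (by simp) (by simp)
  have fkf : ∀ a, f (a, false) = d (a, false) := fun a => fk _ (by simp) (by simp) (by simp)
  have hpc : p1 * c (a1, true) + p2 * c (a2, true) + s * c (a3, true) = s := by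
    rw [c1, c2, c3, ← hb3, hp1, hp2]
    linear_combination (1 - b3) * hs
  have hpw : p1 * w1 + p2 * w2 + s * w3 = 0 := by
    rw [hp1, hp2, hw1, hw2, hw3]; ring
  have F1 : f (a1, true) = b (a1, true) - w1 * s := by
    rw [f1, dkt, d3, d2, ckf, ckf]
    linear_combination c1 - w1 * hpc + c (a1, true) * hpw
  have F2 : f (a2, true) = b (a2, true) - w2 * s := by
    rw [f2, dkt, d3, d1, ckf, ckf]
    linear_combination c2 - w2 * hpc + c (a2, true) * hpw
  have F3 : f (a3, true) = b (a3, true) - w3 * s := by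
    rw [f3, dkt, d1, d2, ckf, ckf]
    linear_combination c3 - w3 * hpc + c (a3, true) * hpw
  refine ⟨f, (hc.trans hd).trans hf, ?_, ?_, ?_⟩
  · rw [F1, hz, hw1]; ring
  · rw [F2, hz, hw2]; ring
  have hw1' : s * η ∣ w1 := ⟨-(s * z (a1, true)), by rw [hw1]; ring⟩
  have hw2' : s * η ∣ w2 := ⟨-(s * z (a2, true)), by rw [hw2]; ring⟩
  have hw3' : s * η ∣ w3 := ⟨(1 - b3) * (u * z (a1, true) + v * z (a2, true)), by rw [hw3]; ring⟩
  have key : ∀ j, s * η ∣ b' j - f j := by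
    intro j
    have hz' : s * η ∣ b' j - b j := ⟨s ^ 2 * z j, by rw [hz]; ring⟩
    have h2 : s * η ∣ b j - f j := by
      by_cases e1 : j = (a1, true)
      · rw [e1, F1, sub_sub_cancel]; exact hw1'.mul_right _
      by_cases e2 : j = (a2, true)
      · rw [e2, F2, sub_sub_cancel]; exact hw2'.mul_right _
      by_cases e3 : j = (a3, true)
      · rw [e3, F3, sub_sub_cancel]; exact hw3'.mul_right _
      rw [fk j e1 e2 e3]
      by_cases g1 : j = (a1, false)
      · rw [g1, d1, ckf, sub_sub_cancel]; exact dvd_sub (hw2'.mul_right _) (hw3'.mul_right _)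
      by_cases g2 : j = (a2, false)
      · rw [g2, d2, ckf, sub_sub_cancel]; exact dvd_sub (hw3'.mul_right _) (hw1'.mul_right _)
      by_cases g3 : j = (a3, false)
      · rw [g3, d3, ckf, sub_sub_cancel]; exact dvd_sub (hw1'.mul_right _) (hw2'.mul_right _)
      rw [dk j g1 g2 g3, ck j e1 e2 e3, sub_self]
      exact dvd_zero _
    have := dvd_add hz' h2
    rwa [sub_add_sub_cancel] at this
  choose e he using key
  exact ⟨e, fun j => by rw [← mul_assoc, ← he]; ring⟩

/-- indices of sign `s` different from `±a1, ±a2`. -/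
def Jc (a1 a2 : Fin r) (s : Bool) : Finset (Idx r) :=
  Finset.univ.filter (fun k => k.1 ≠ a1 ∧ k.1 ≠ a2 ∧ k.2 = s)

@[simp] theorem mem_Jc (a1 a2 : Fin r) (s : Bool) (k : Idx r) :
    k ∈ Jc a1 a2 s ↔ k.1 ≠ a1 ∧ k.1 ≠ a2 ∧ k.2 = s := by simp [Jc]

theorem card_Jc (a1 a2 : Fin r) (h : a1 ≠ a2) (s : Bool) : (Jc a1 a2 s).card = r - 2 := by
  have : Jc a1 a2 s = (Jb a1 s).erase (a2, s) := by
    ext ⟨k, t⟩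
    simp only [mem_Jc, Finset.mem_erase, mem_Jb, ne_eq, Prod.mk.injEq]
    tauto
  rw [this, Finset.card_erase_of_mem (by simp [h.symm]), card_Jb]
  omega

theorem Jc_ok (a1 a2 : Fin r) (s t : Bool) (a : Fin r) (ha : a = a1 ∨ a = a2) :
    ∀ j ∈ Jc a1 a2 s, j ≠ (a, t) ∧ j ≠ ng (a, t) ∧ ng j ∉ Jc a1 a2 s := by
  rintro ⟨j, u⟩ hj
  rw [mem_Jc] at hj
  obtain ⟨h1, h2, h3⟩ := hj
  simp only at h1 h2 h3
  subst h3
  have : j ≠ a := by rcases ha with rfl | rfl <;> assumption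
  refine ⟨?_, ?_, ?_⟩ <;> simp [ng, this]

/-- fix all coordinates of sign `t` off `±a1,±a2`. -/
theorem fixJ (a1 a2 : Fin r) (h12 : a1 ≠ a2) (t : Bool) (c b' : Idx r → R) (s η u v : R)
    (e : Idx r → R) (h1 : c (a1, true) = b' (a1, true)) (h2 : c (a2, true) = b' (a2, true))
    (he : ∀ j ∈ Jc a1 a2 t, b' j = c j + s * (η * e j))
    (hs : u * b' (a1, true) + v * b' (a2, true) = s) :
    ∃ d, Reach (2 * (r - 2)) c d ∧ d (a1, true) = b' (a1, true) ∧ d (a2, true) = b' (a2, true) ∧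
      (∀ j ∈ Jc a1 a2 t, d j = b' j) ∧ (∀ j ∈ Jc a1 a2 (!t), d j = c j) ∧
      (∀ j, η ∣ c j - d j) := by
  have hR1 := reach_col (a1, true) (Jc a1 a2 t) (fun k => η * e k * u) c
    (Jc_ok a1 a2 t true a1 (Or.inl rfl))
  set c1 := colRes (a1, true) (Jc a1 a2 t) (fun k => η * e k * u) c with hc1
  have hR2 := reach_col (a2, true) (Jc a1 a2 t) (fun k => η * e k * v) c1
    (Jc_ok a1 a2 t true a2 (Or.inr rfl))
  set c2 := colRes (a2, true) (Jc a1 a2 t) (fun k => η * e k * v) c1 with hc2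
  have x1 : c1 (a1, true) = b' (a1, true) := by simp [hc1, colRes, h1]
  have x2 : c1 (a2, true) = b' (a2, true) := by simp [hc1, colRes, h2]
  have y1 : c2 (a1, true) = b' (a1, true) := by simp [hc2, colRes, x1]
  have y2 : c2 (a2, true) = b' (a2, true) := by simp [hc2, colRes, x2]
  rw [card_Jc a1 a2 h12] at hR1 hR2
  refine ⟨c2, (hR1.trans hR2).mono (by omega), y1, y2, ?_, ?_, ?_⟩
  · intro j hj
    rw [hc2, colRes, if_neg (Jc_ok a1 a2 t true a2 (Or.inr rfl) j hj).2.1, if_pos hj, x2,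
      hc1, colRes, if_neg (Jc_ok a1 a2 t true a1 (Or.inl rfl) j hj).2.1, if_pos hj, h1,
      he j hj, ← hs]
    ring
  · intro j hj
    have hj' : j ∉ Jc a1 a2 t := by
      rw [mem_Jc] at hj ⊢
      simp [hj.2.2]
    rw [hc2, colRes, if_neg (Jc_ok a1 a2 _ true a2 (Or.inr rfl) j hj).2.1, if_neg hj',
      hc1, colRes, if_neg (Jc_ok a1 a2 _ true a1 (Or.inl rfl) j hj).2.1, if_neg hj']
  · intro j
    have g1 : η ∣ c j - c1 j := by
      simp only [hc1, colRes]
      split_ifs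
      · rw [sub_sub_cancel]
        exact Finset.dvd_sum fun k _ => ⟨e k * u * c (ng k), by ring⟩
      · exact ⟨-(e j * u * c (a1, true)), by ring⟩
      · simp
    have g2 : η ∣ c1 j - c2 j := by
      simp only [hc2, colRes]
      split_ifs
      · rw [sub_sub_cancel]
        exact Finset.dvd_sum fun k _ => ⟨e k * v * c1 (ng k), by ring⟩
      · exact ⟨-(e j * v * c1 (a2, true)), by ring⟩
      · simp
    have := dvd_add g1 g2
    rwa [sub_add_sub_cancel] at this

theorem core1 (hr : 3 ≤ r) (a1 a2 a3 : Fin r) (h12 : a1 ≠ a2) (h13 : a1 ≠ a3) (h23 : a2 ≠ a3)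
    (b b' : Idx r → R) (s η u v u' v' : R) (z : Idx r → R)
    (hz : ∀ j, b' j = b j + s ^ 3 * η * z j)
    (hs : u * b (a1, true) + v * b (a2, true) = s)
    (hs' : u' * b' (a1, true) + v' * b' (a2, true) = s) :
    ∃ c, Reach (4 * r + 1) b c ∧ (∀ j, j ≠ (a1, false) → j ≠ (a2, false) → c j = b' j) ∧
      ∃ e : Idx r → R, ∀ j, b' j = c j + η * e j := by
  obtain ⟨c, hc, c1, c2, e, he⟩ := nine a1 a2 a3 h12 h13 h23 b b' s η u v z hz hs
  obtain ⟨d, hd, d1, d2, d3, d4, d5⟩ := fixJ a1 a2 h12 true c b' s η u' v' e c1 c2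
    (fun j _ => he j) hs'
  obtain ⟨f, hf, f1, f2, f3, f4, f5⟩ := fixJ a1 a2 h12 false d b' s η u' v' e d1 d2
    (fun j hj => by rw [d4 j hj]; exact he j) hs'
  refine ⟨f, ((hc.trans hd).trans hf).mono (by omega), ?_, ?_⟩
  · rintro ⟨j, t⟩ hj1 hj2
    by_cases k1 : j = a1
    · subst k1
      rcases t with _ | _
      · exact absurd rfl hj1
      · exact f1
    by_cases k2 : j = a2
    · subst k2
      rcases t with _ | _
      · exact absurd rfl hj2
      · exact f2
    rcases t with _ | _
    · exact f3 _ (by simp [k1, k2])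
    · rw [f4 _ (by simp [k1, k2])]
      exact d3 _ (by simp [k1, k2])
  · have key : ∀ j, η ∣ b' j - f j := by
      intro j
      have h1 : η ∣ b' j - c j := ⟨s * e j, by rw [he]; ring⟩
      have := dvd_add (dvd_add h1 (d5 j)) (f5 j)
      rwa [sub_add_sub_cancel, sub_add_sub_cancel] at this
    choose e' he' using key
    exact ⟨e', fun j => by rw [← he']; ring⟩

open Polynomial in
theorem core2 (hr : 3 ≤ r) (a1 a2 a3 : Fin r) (h12 : a1 ≠ a2) (h13 : a1 ≠ a3) (h23 : a2 ≠ a3)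
    (b : Idx r → R[X]) (hq : qf b = 0) (s : R) (u v : R[X])
    (hs : u * b (a1, true) + v * b (a2, true) = C s) (τ y : R) :
    Reach (4 * r + 2) (fun j => (b j).eval τ) (fun j => (b j).eval (τ + s ^ 4 * y)) := by
  set B : Idx r → R[X] := fun j => C ((b j).eval τ) with hB
  set φ : R[X] →+* R[X] := compRingHom (C τ + C (s ^ 3) * X) with hφ
  set B' : Idx r → R[X] := fun j => φ (b j) with hB'
  have hz : ∀ j, ∃ z, B' j = B j + (C s) ^ 3 * X * z := by
    intro j
    have h := sub_dvd_eval_sub (C τ + C (s ^ 3) * X) (C τ) ((b j).map C)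
    rw [eval_map, eval_map, add_sub_cancel_left] at h
    change _ ∣ (b j).comp _ - (b j).comp _ at h
    obtain ⟨z, hz⟩ := h
    refine ⟨z, ?_⟩
    rw [comp_C] at hz
    rw [← C_pow, ← hz]
    simp [hB, hB', hφ]
  choose z hz using hz
  have hqB' : qf B' = 0 := by
    have : qf B' = φ (qf b) := by simp [qf, hB', map_sum]
    rw [this, hq, map_zero]
  have hqB : qf B = 0 := by
    have : qf B = C (evalRingHom τ (qf b)) := by simp [qf, hB, map_sum, eval_finsetSum]
    rw [this, hq, map_zero, map_zero]
  have hs1 : C (u.eval τ) * B (a1, true) + C (v.eval τ) * B (a2, true) = C s := by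
    have := congrArg (fun f => C (f.eval τ)) hs
    simpa [hB] using this
  have hs2 : φ u * B' (a1, true) + φ v * B' (a2, true) = C s := by
    have := congrArg φ hs
    simpa [hB', hφ] using this
  obtain ⟨c, hc, hcj, e, he⟩ := core1 hr a1 a2 a3 h12 h13 h23 B B' (C s) X _ _ _ _ z hz hs1 hs2
  have hqc : qf c = 0 := by rw [hc.qf_eq, hqB]
  have hrel : B' (a1, true) * e (a1, false) + B' (a2, true) * e (a2, false) = 0 := by
    have h0 : X * (B' (a1, true) * e (a1, false) + B' (a2, true) * e (a2, false)) = 0 := by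
      have h1 : qf B' - qf c = 0 := by rw [hqB', hqc, sub_self]
      rw [qf, qf, ← Finset.sum_sub_distrib] at h1
      rw [Fintype.sum_eq_add a1 a2 h12] at h1
      · rw [← h1, hcj (a1, true) (by simp) (by simp), hcj (a2, true) (by simp) (by simp),
          he (a1, false), he (a2, false)]
        ring
      · intro j hj
        rw [hcj (j, true) (by simp) (by simp), hcj (j, false) (by simp [hj.1]) (by simp [hj.2]),
          sub_self]
    exact isRegular_X.left (by simpa using h0)
  set ψ : R[X] →+* R := evalRingHom (s * y) with hψ
  have hc' := hc.map ψ
  set ξ := y * (ψ (φ v) * ψ (e (a1, false)) - ψ (φ u) * ψ (e (a2, false))) with hξ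
  have hfin := hc'.trans (Reach.one (a1, false) (a2, true) ξ (by simp [h12]) (by simp [h12]) _)
  have hs3 : ψ (φ u) * ψ (B' (a1, true)) + ψ (φ v) * ψ (B' (a2, true)) = s := by
    have := congrArg ψ hs2
    simpa [hψ] using this
  have hrel' : ψ (B' (a1, true)) * ψ (e (a1, false)) + ψ (B' (a2, true)) * ψ (e (a2, false)) = 0 := by
    rw [← map_mul, ← map_mul, ← map_add, hrel, map_zero]
  have hψX : ψ X = s * y := by simp [hψ]
  have k1 : ψ (B' (a1, false)) = ψ (c (a1, false)) + s * y * ψ (e (a1, false)) := by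
    rw [he (a1, false), map_add, map_mul, hψX]
  have k2 : ψ (B' (a2, false)) = ψ (c (a2, false)) + s * y * ψ (e (a2, false)) := by
    rw [he (a2, false), map_add, map_mul, hψX]
  convert hfin using 1
  · ext j; simp [hB, hψ]
  · ext j
    have hl : (b j).eval (τ + s ^ 4 * y) = ψ (B' j) := by
      simp only [hψ, hB', hφ, coe_evalRingHom, coe_compRingHom_apply, eval_comp]
      congr 1
      simp
      ring
    rw [hl]
    have n2 : ng ((a2, true) : Idx r) = (a2, false) := rfl
    have n1 : ng ((a1, false) : Idx r) = (a1, true) := rfl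
    rw [opE, n1, n2]
    by_cases j1 : j = (a1, false)
    · subst j1
      rw [if_pos rfl, if_neg (by simp [h12]), hcj (a2, true) (by simp) (by simp), k1, hξ]
      linear_combination (-(y * ψ (e (a1, false)))) * hs3 + (y * ψ (φ u)) * hrel'
    · by_cases j2 : j = (a2, false)
      · subst j2
        rw [if_neg j1, if_pos rfl, hcj (a1, true) (by simp) (by simp), k2, hξ]
        linear_combination (-(y * ψ (e (a2, false)))) * hs3 + (y * ψ (φ v)) * hrel'
      · rw [if_neg j1, if_neg j2, hcj j j1 j2]
        simp
end

open Polynomial in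
theorem incomp {A : Type*} [CommRing A] (I J : Ideal A[X]) [hI : I.IsPrime] (hIJ : I ≤ J)
    (h : A[X]) (hm : h.Monic) (hh : h ∈ I) (he : J.comap C ≤ I.comap C) : I = J := by
  by_contra hne
  obtain ⟨x, hxJ, hxI⟩ := SetLike.exists_of_lt (lt_of_le_of_ne hIJ hne)
  obtain ⟨p, hp, hpx⟩ := hm.quotient_isIntegral hh (Ideal.Quotient.mk I x)
  have hpI : p.eval₂ C x ∈ I := by
    rw [← Ideal.Quotient.eq_zero_iff_mem, hom_eval₂, ← hpx]
    rfl
  have := Ideal.comap_lt_comap_of_root_mem_sdiff (f := (C : A →+* A[X])) hIJ ⟨hxJ, hxI⟩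
    (map_monic_ne_zero hp) hpI
  exact absurd he (not_le_of_gt this)

open Polynomial in
theorem lyover {A : Type*} [CommRing A] (I : Ideal A[X]) (P : Ideal A) [P.IsPrime]
    (h : A[X]) (hm : h.Monic) (hh : h ∈ I) (he : I.comap C ≤ P) :
    ∃ Q : Ideal A[X], I ≤ Q ∧ Q.IsPrime ∧ Q.comap C = P := by
  have hIntegral : Algebra.IsIntegral A (A[X] ⧸ I) := ⟨hm.quotient_isIntegral hh⟩
  obtain ⟨Q, -, hQ, hQP⟩ := Ideal.exists_ideal_over_prime_of_isIntegral (S := A[X] ⧸ I) P ⊥ (by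
    intro x hx
    refine he ?_
    rw [Ideal.mem_comap] at hx ⊢
    rw [← Ideal.Quotient.eq_zero_iff_mem]
    exact hx)
  refine ⟨Q.comap (Ideal.Quotient.mk I), ?_, Ideal.IsPrime.comap _, ?_⟩
  · intro x hx
    rw [Ideal.mem_comap, Ideal.Quotient.eq_zero_iff_mem.mpr hx]
    exact Q.zero_mem
  · rw [← hQP, Ideal.comap_comap]
    rfl

open Polynomial in
/-- primes over `F` containing `h`. -/
def MF {A : Type*} [CommRing A] (F : Set (Ideal A)) (h : A[X]) : Set (Ideal A[X]) :=
  {m | m.IsPrime ∧ m.comap C ∈ F ∧ h ∈ m}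

open Polynomial in
theorem MF_anti {A : Type*} [CommRing A] (F : Set (Ideal A))
    (hF : ∀ p ∈ F, ∀ q ∈ F, p ≤ q → p = q) (h : A[X]) (hm : h.Monic) :
    ∀ m ∈ MF F h, ∀ m' ∈ MF F h, m ≤ m' → m = m' := by
  rintro m ⟨h1, h2, h3⟩ m' ⟨h1', h2', h3'⟩ hle
  have := hF _ h2 _ h2' (Ideal.comap_mono hle)
  exact incomp m m' hle h hm h3 this.ge

open Polynomial in
theorem MF_fin {A : Type*} [CommRing A] [IsNoetherianRing A] (F : Set (Ideal A)) (hfin : F.Finite)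
    (h : A[X]) (hm : h.Monic) : (MF F h).Finite := by
  refine (hfin.biUnion fun p _ => Ideal.finite_minimalPrimes_of_isNoetherianRing A[X]
    (p.map C ⊔ Ideal.span {h})).subset ?_
  rintro m ⟨h1, h2, h3⟩
  rw [Set.mem_iUnion₂]
  refine ⟨_, h2, ?_⟩
  have hle : (m.comap C).map C ⊔ Ideal.span {h} ≤ m :=
    sup_le Ideal.map_comap_le (by rwa [Ideal.span_singleton_le_iff_mem])
  obtain ⟨q, hq, hqm⟩ := Ideal.exists_minimalPrimes_le hle
  have hq1 : q.IsPrime := hq.1.1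
  have : q = m := by
    refine incomp q m hqm h hm ?_ ?_
    · exact hq.1.2 (Ideal.mem_sup_right (Ideal.mem_span_singleton_self h))
    · exact Ideal.le_comap_of_map_le (le_sup_left.trans hq.1.2)
  exact this ▸ hq

section
variable {r : ℕ} {R : Type*} [CommRing R]

theorem sweep (M : Set (Ideal R)) (hfin : M.Finite) (hp : ∀ m ∈ M, m.IsPrime)
    (hanti : ∀ m ∈ M, ∀ m' ∈ M, m ≤ m' → m = m') (a1 a2 : Fin r) (h12 : a1 ≠ a2)
    (K : Finset (Idx r)) (hK : ∀ k ∈ K, k.1 ≠ a1 ∧ k.1 ≠ a2) (b : Idx r → R)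
    (hb : ∀ m ∈ M, b (a2, true) ∉ m ∨ ∃ k ∈ K, b k ∉ m) :
    ∃ c, Reach K.card b c ∧ c (a1, true) = b (a1, true) ∧ ∀ m ∈ M, c (a2, true) ∉ m := by
  induction K using Finset.induction_on generalizing b with
  | empty => exact ⟨b, Reach.refl _ _, rfl, fun m hm => by simpa using hb m hm⟩
  | insert j K hj ih =>
    obtain ⟨x, hx⟩ := PA_sep M hfin hp hanti (fun m => b (a2, true) ∈ m ∧ b j ∉ m)
    obtain ⟨hj1, hj2⟩ := hK j (Finset.mem_insert_self _ _)
    have g1 : ((a2, true) : Idx r) ≠ j := fun h => hj2 (by rw [← h])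
    have g2 : ((a2, true) : Idx r) ≠ ng j := fun h => hj2 (by
      have := congrArg Prod.fst h; exact this.symm)
    have g3 : ((a1, true) : Idx r) ≠ ng j := fun h => hj1 (by
      have := congrArg Prod.fst h; exact this.symm)
    obtain ⟨c, hc, hc1, hc2⟩ := ih (fun k hk => hK k (Finset.mem_insert_of_mem hk))
      (opE (a2, true) j x b) (by
        intro m hm
        have := hp m hm
        have e2 : opE (a2, true) j x b (a2, true) = b (a2, true) + x * b j := by
          simp [opE, g2]
        rw [e2]
        by_cases hxm : x ∈ m
        · have key : ∀ k, opE (a2, true) j x b k ∈ m → b k ∈ m := by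
            intro k hk
            have : b k = opE (a2, true) j x b k - x * (if k = (a2, true) then b j else 0)
                + x * (if k = ng j then b (ng (a2, true)) else 0) := by
              simp only [opE]; split_ifs <;> ring
            rw [this]
            exact m.add_mem (m.sub_mem hk (m.mul_mem_right _ hxm)) (m.mul_mem_right _ hxm)
          by_cases h2 : b (a2, true) ∈ m
          · right
            have h3 := (hx m hm).mp hxm
            have hbj : b j ∈ m := by
              by_contra h; exact h3 ⟨h2, h⟩
            rcases hb m hm with h | ⟨k, hk, hkm⟩
            · exact absurd h2 h
            · rw [Finset.mem_insert] at hk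
              rcases hk with rfl | hk
              · exact absurd hbj hkm
              · exact ⟨k, hk, fun h => hkm (key k h)⟩
          · left
            exact fun h => h2 ((Ideal.add_mem_iff_left _ (m.mul_mem_right _ hxm)).mp h)
        · left
          have h3 : b (a2, true) ∈ m ∧ b j ∉ m := by
            by_contra h; exact hxm ((hx m hm).mpr h)
          intro h
          rw [Ideal.add_mem_iff_right _ h3.1] at h
          exact (this.mem_or_mem h).elim hxm h3.2)
    refine ⟨c, ?_, ?_, hc2⟩
    · rw [Finset.card_insert_of_notMem hj]
      exact Reach.step _ _ _ _ _ x g1 g2 hc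
    · rw [hc1]
      simp [opE, g3, h12]

theorem prep (M : Set (Ideal R)) (hfin : M.Finite) (hp : ∀ m ∈ M, m.IsPrime)
    (hanti : ∀ m ∈ M, ∀ m' ∈ M, m ≤ m' → m = m') (a1 a2 a3 : Fin r) (h12 : a1 ≠ a2)
    (h13 : a1 ≠ a3) (h23 : a2 ≠ a3) (b : Idx r → R)
    (hb : ∀ m ∈ M, ∃ k : Idx r, k.1 ≠ a1 ∧ b k ∉ m) :
    ∃ c, Reach (1 + 2 * (r - 2)) b c ∧ c (a1, true) = b (a1, true) ∧
      ∀ m ∈ M, c (a2, true) ∉ m := by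
  set K : Finset (Idx r) := Jc a1 a2 true ∪ Jc a1 a2 false with hKdef
  have hK : ∀ k, k ∈ K ↔ k.1 ≠ a1 ∧ k.1 ≠ a2 := by
    rintro ⟨k, _ | _⟩ <;> simp [hKdef]
  have hcard : K.card ≤ 2 * (r - 2) := by
    refine (Finset.card_union_le _ _).trans ?_
    rw [card_Jc _ _ h12, card_Jc _ _ h12]; omega
  obtain ⟨x, hx⟩ := PA_sep M hfin hp hanti (fun m => b (a2, true) ∈ m ∧ ∀ k ∈ K, b k ∈ m)
  have H1 := Reach.one (a3, true) (a2, false) x (by simp) (by simp [h23.symm]) b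
  obtain ⟨c, hc, hc1, hc2⟩ := sweep M hfin hp hanti a1 a2 h12 K (fun k hk => (hK k).mp hk)
    (opE (a3, true) (a2, false) x b) (by
      intro m hm
      have := hp m hm
      by_cases hxm : x ∈ m
      · have key : ∀ k, opE (a3, true) (a2, false) x b k ∈ m → b k ∈ m := by
          intro k hk
          have : b k = opE (a3, true) (a2, false) x b k
              - x * (if k = (a3, true) then b (a2, false) else 0)
              + x * (if k = ng (a2, false) then b (ng (a3, true)) else 0) := by
            simp only [opE]; split_ifs <;> ring
          rw [this]
          exact m.add_mem (m.sub_mem hk (m.mul_mem_right _ hxm)) (m.mul_mem_right _ hxm)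
        have h3 := (hx m hm).mp hxm
        by_cases h2 : b (a2, true) ∈ m
        · right
          by_contra hcon
          push Not at hcon
          exact h3 ⟨h2, fun k hk => key k (hcon k hk)⟩
        · left
          exact fun h => h2 (key _ h)
      · right
        have h3 : b (a2, true) ∈ m ∧ ∀ k ∈ K, b k ∈ m := by
          by_contra h; exact hxm ((hx m hm).mpr h)
        refine ⟨(a3, true), (hK _).mpr ⟨h13.symm, h23.symm⟩, ?_⟩
        have e : opE (a3, true) (a2, false) x b (a3, true) = b (a3, true) + x * b (a2, false) := by
          simp [opE, h23.symm]
        rw [e]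
        intro h
        rw [Ideal.add_mem_iff_right _ (h3.2 _ ((hK _).mpr ⟨h13.symm, h23.symm⟩))] at h
        have h4 : b (a2, false) ∈ m := (this.mem_or_mem h).resolve_left hxm
        obtain ⟨⟨k, s⟩, hk1, hk2⟩ := hb m hm
        apply hk2
        by_cases hk : k = a2
        · subst hk
          rcases s with _ | _
          · exact h4
          · exact h3.1
        · exact h3.2 _ ((hK _).mpr ⟨hk1, hk⟩))
  refine ⟨c, (H1.trans hc).mono (by omega), ?_, hc2⟩
  rw [hc1]
  simp [opE, h13, h12]

open Polynomial in
theorem Local_lemma [IsNoetherianRing R] (F : Set (Ideal R)) (hfin : F.Finite)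
    (hp : ∀ p ∈ F, p.IsPrime) (hanti : ∀ p ∈ F, ∀ q ∈ F, p ≤ q → p = q)
    (hr : 3 ≤ r) (a1 a2 a3 : Fin r) (h12 : a1 ≠ a2) (h13 : a1 ≠ a3) (h23 : a2 ≠ a3)
    (b : Idx r → R[X]) (hb : ∀ P : Ideal R[X], P.IsPrime → (∀ k, b k ∈ P) → False)
    (hmon : (b (a1, true)).Monic) (g : R[X]) (hg : g.Monic)
    (hgs : g ∈ Ideal.span (b '' (Jb a1 true : Set (Idx r))))
    (hdeg : g.natDegree + (b (a2, true)).natDegree < (b (a1, true)).natDegree) :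
    ∃ c, Reach (2 * r - 2) b c ∧ ∃ s : R, (∀ p ∈ F, s ∉ p) ∧ ∃ u v,
      u * c (a1, true) + v * c (a2, true) = C s := by
  obtain ⟨x, hx⟩ := PA_sep (MF F g) (MF_fin F hfin g hg) (fun m hm => hm.1)
    (MF_anti F hanti g hg) (fun m => b (a2, false) ∈ m)
  set y := x %ₘ g with hy
  have hxy : ∀ m ∈ MF F g, (y ∈ m ↔ ¬ b (a2, false) ∈ m) := by
    intro m hm
    rw [← hx m hm, ← modByMonic_add_div x g, Ideal.add_mem_iff_left _ (m.mul_mem_right _ hm.2.2)]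
  have H1 := Reach.one (a1, true) (a2, true) y (by simp [h12]) (by simp) b
  set b1 := opE (a1, true) (a2, true) y b with hb1
  have e1 : b1 (a1, true) = b (a1, true) + y * b (a2, true) := by simp [hb1, opE]
  have e2 : b1 (a2, false) = b (a2, false) - y * b (a1, false) := by simp [hb1, opE]
  have ek : ∀ k, k ≠ (a1, true) → k ≠ (a2, false) → b1 k = b k := by
    intro k h1 h2
    simp [hb1, opE, h1, h2]
  have hmon1 : (b1 (a1, true)).Monic := by
    rw [e1]
    refine hmon.add_of_left (degree_lt_degree ?_)
    have h1 := natDegree_mul_le (p := y) (q := b (a2, true))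
    have h2 := natDegree_modByMonic_le x hg
    rw [← hy] at h2
    omega
  obtain ⟨c, hc, hc1, hc2⟩ := prep (MF F (b1 (a1, true))) (MF_fin F hfin _ hmon1)
    (fun m hm => hm.1) (MF_anti F hanti _ hmon1) a1 a2 a3 h12 h13 h23 b1 (by
      rintro m ⟨hm1, hm2, hm3⟩
      by_contra hcon
      push Not at hcon
      have hold : ∀ k : Idx r, k.1 ≠ a1 → k ≠ (a2, false) → b k ∈ m := by
        intro k hk1 hk2
        rw [← ek k (fun h => hk1 (by rw [h])) hk2]
        exact hcon k hk1
      have hgm : g ∈ m := by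
        refine (Ideal.span_le.mpr ?_ : Ideal.span (b '' (Jb a1 true : Set (Idx r))) ≤ m) hgs
        rintro _ ⟨k, hk, rfl⟩
        rw [Finset.mem_coe, mem_Jb] at hk
        exact hold k hk.1 (fun h => by rw [h] at hk; simp at hk)
      have hb2 : b (a2, true) ∈ m := hold _ h12.symm (by simp)
      have hb1' : b (a1, true) ∈ m := by
        rw [e1] at hm3
        exact (Ideal.add_mem_iff_left _ (m.mul_mem_left _ hb2)).mp hm3
      have hn2 := hcon (a2, false) h12.symm
      rw [e2] at hn2
      have hym := hxy m ⟨hm1, hm2, hgm⟩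
      by_cases hbn : b (a2, false) ∈ m
      · have h5 : y * b (a1, false) ∈ m := by
          have := m.sub_mem hbn hn2
          rwa [sub_sub_cancel] at this
        have h6 : b (a1, false) ∈ m :=
          (hm1.mem_or_mem h5).resolve_left (fun h => hym.mp h hbn)
        refine hb m hm1 ?_
        rintro ⟨k, s⟩
        by_cases hk : k = a1
        · subst hk
          rcases s with _ | _
          · exact h6
          · exact hb1'
        · by_cases hk2 : ((k, s) : Idx r) = (a2, false)
          · rw [hk2]; exact hbn
          · exact hold _ hk hk2
      · have hyy := hym.mpr hbn
        apply hbn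
        have := m.add_mem hn2 (m.mul_mem_right (b (a1, false)) hyy)
        rwa [sub_add_cancel] at this)
  refine ⟨c, (H1.trans hc).mono (by omega), ?_⟩
  have hmc : (c (a1, true)).Monic := hc1 ▸ hmon1
  set I : Ideal R[X] := Ideal.span {c (a1, true), c (a2, true)} with hI
  have hnot : ∀ p ∈ F, ¬ I.comap C ≤ p := by
    intro p hpF hle
    have := hp p hpF
    obtain ⟨Q, hQ1, hQ2, hQ3⟩ := lyover I p _ hmc (Ideal.subset_span (by simp)) hle
    refine hc2 Q ⟨hQ2, hQ3 ▸ hpF, ?_⟩ (hQ1 (Ideal.subset_span (by simp)))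
    rw [← hc1]
    exact hQ1 (Ideal.subset_span (by simp))
  have : ∃ s ∈ I.comap C, ∀ p ∈ F, s ∉ p := by
    by_contra hcon
    push Not at hcon
    have hsub : ((I.comap C : Ideal R) : Set R) ⊆ ⋃ p ∈ (hfin.toFinset : Set (Ideal R)), (p : Set R) := by
      intro s hs
      obtain ⟨p, hpF, hsp⟩ := hcon s hs
      exact Set.mem_iUnion₂.mpr ⟨p, by simpa using hpF, hsp⟩
    obtain ⟨p, hpF, hle⟩ := (Ideal.subset_union_prime (f := fun p : Ideal R => p) ⊥ ⊥
      (fun i hi _ _ => hp i (by simpa using hi))).mp hsub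
    exact hnot p (by simpa using hpF) hle
  obtain ⟨s, hs, hsF⟩ := this
  refine ⟨s, hsF, ?_⟩
  rw [Ideal.mem_comap, hI, Ideal.mem_span_pair] at hs
  exact hs
end

section
variable {r : ℕ} {R : Type*} [CommRing R]

open Polynomial in
theorem piece (hr : 3 ≤ r) (a1 a2 a3 : Fin r) (h12 : a1 ≠ a2) (h13 : a1 ≠ a3) (h23 : a2 ≠ a3)
    (b c : Idx r → R[X]) (hq : qf b = 0) (hbc : Reach (2 * r - 2) b c) (s : R) (u v : R[X])
    (hs : u * c (a1, true) + v * c (a2, true) = C s) (τ y : R) :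
    Reach (8 * r - 2) (fun j => (b j).eval τ) (fun j => (b j).eval (τ + s ^ 4 * y)) := by
  have h1 := hbc.map (evalRingHom τ)
  have h2 := (hbc.map (evalRingHom (τ + s ^ 4 * y))).symm
  have h3 := core2 hr a1 a2 a3 h12 h13 h23 c (by rw [hbc.qf_eq, hq]) s u v hs τ y
  exact ((h1.trans h3).trans h2).mono (by omega)

open Polynomial in
theorem chainL (b : Idx r → R[X]) (N : ℕ) (L : List R)
    (hL : ∀ s ∈ L, ∀ τ y, Reach N (fun j => (b j).eval τ) (fun j => (b j).eval (τ + s * y))) :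
    ∀ x ∈ Ideal.span {x | x ∈ L}, ∀ τ : R,
      Reach (L.length * N) (fun j => (b j).eval τ) (fun j => (b j).eval (τ + x)) := by
  induction L with
  | nil =>
    intro x hx τ
    have : x = 0 := by simpa using hx
    rw [this, add_zero]
    exact Reach.refl _ _
  | cons s L ih =>
    intro x hx τ
    have e : {x | x ∈ s :: L} = insert s {x | x ∈ L} := by ext; simp
    rw [e, Ideal.mem_span_insert] at hx
    obtain ⟨a, z, hz, rfl⟩ := hx
    have h1 := hL s (by simp) τ a
    have h2 := ih (fun s hs => hL s (by simp [hs])) z hz (τ + s * a)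
    have h3 := (h1.trans h2).mono (show _ ≤ (s :: L).length * N by
      rw [List.length_cons]; ring_nf; omega)
    rwa [add_assoc, mul_comm s a] at h3

open Polynomial in
theorem chain [IsNoetherianRing R] (d : ℕ) (hd : ∀ P : Ideal R, P.IsPrime → P.height ≤ d)
    (hr : 3 ≤ r) (a1 a2 a3 : Fin r) (h12 : a1 ≠ a2) (h13 : a1 ≠ a3) (h23 : a2 ≠ a3)
    (b : Idx r → R[X]) (hq : qf b = 0)
    (hb : ∀ P : Ideal R[X], P.IsPrime → (∀ k, b k ∈ P) → False)
    (hmon : (b (a1, true)).Monic) (g : R[X]) (hg : g.Monic)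
    (hgs : g ∈ Ideal.span (b '' (Jb a1 true : Set (Idx r))))
    (hdeg : g.natDegree + (b (a2, true)).natDegree < (b (a1, true)).natDegree) (τ x : R) :
    Reach ((d + 1) * (8 * r - 2)) (fun j => (b j).eval τ) (fun j => (b j).eval (τ + x)) := by
  obtain ⟨L, hL1, hL2, hL3⟩ := PS_lemma d hd
    (fun s => ∀ τ y, Reach (8 * r - 2) (fun j => (b j).eval τ) (fun j => (b j).eval (τ + s * y))) (by
      intro F hF1 hF2 hF3
      obtain ⟨c, hc, s, hs, u, v, huv⟩ := Local_lemma F hF1 hF2 hF3 hr a1 a2 a3 h12 h13 h23 b hb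
        hmon g hg hgs hdeg
      refine ⟨s ^ 4, fun τ y => piece hr a1 a2 a3 h12 h13 h23 b c hq hc s u v huv τ y, ?_⟩
      intro p hp h
      exact hs p hp ((hF2 p hp).mem_of_pow_mem _ h))
  rw [← hL1]
  exact chainL b _ L hL2 x (by rw [hL3]; trivial) τ
end

theorem height_le_of_dim {K : Type*} [CommRing K] (D : ℕ) (h : ringKrullDim K = (D : WithBot ℕ∞))
    (P : Ideal K) (hP : P.IsPrime) : P.height ≤ D := by
  have := Ideal.height_le_ringKrullDim_of_isPrime (I := P)
  rw [h] at this
  exact_mod_cast this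

open Polynomial in
theorem boost {r : ℕ} {A : Type*} [CommRing A] [Nontrivial A] [IsNoetherianRing A] (d : ℕ)
    (hA : ∀ P : Ideal A, P.IsPrime → P.height ≤ d) (hr : 3 ≤ r)
    (a1 a2 a3 : Fin r) (h12 : a1 ≠ a2) (h13 : a1 ≠ a3) (h23 : a2 ≠ a3)
    (b1 : Idx r → A[X]) (hb1q : qf b1 = 0)
    (hb1u : ∀ P : Ideal A[X], P.IsPrime → (∀ k, b1 k ∈ P) → False)
    (h : Idx r → A[X]) (G : A[X]) (hG : G.Monic) (hhG : ∑ j ∈ Jb a1 true, h j * b1 j = G) :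
    Reach ((d + 1) * (8 * r - 2)) (fun j => (b1 j).eval 1) (fun j => (b1 j).eval 0) := by
  obtain ⟨L, hL⟩ : ∃ L, L = (b1 (a1, true)).natDegree + (b1 (a2, true)).natDegree + 1 := ⟨_, rfl⟩
  have hR2 := reach_row (a1, true) (Jb a1 true) (fun k => X ^ L * (X - 1) * (h k)) b1
    (Jb_ok a1 true true)
  set b2 := rowRes (a1, true) (Jb a1 true) (fun k => X ^ L * (X - 1) * (h k)) b1 with hb2
  have e1 : b2 (a1, true) = b1 (a1, true) + X ^ L * (X - 1) * G := by
    simp only [hb2, rowRes, if_true]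
    rw [← hhG, Finset.mul_sum]
    congr 1
    refine Finset.sum_congr rfl fun j _ => by ring
  have ek : ∀ k ∈ Jb a1 true, b2 k = b1 k := by
    intro k hk
    obtain ⟨k1, k2, k3⟩ := Jb_ok a1 true true k hk
    rw [hb2, rowRes, if_neg k1, if_neg k3]
  have e2 : b2 (a2, true) = b1 (a2, true) := ek _ (by simp [h12.symm])
  have hev : ∀ t : A, (X ^ L * (X - 1) :
      A[X]).eval t = 0 → ∀ k, (b2 k).eval t = (b1 k).eval t := by
    intro t ht k
    simp only [hb2, rowRes]
    split_ifs
    · rw [eval_add, eval_finsetSum, Finset.sum_eq_zero, add_zero]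
      intro j _
      rw [eval_mul, eval_mul, ht, zero_mul, zero_mul]
    · rw [eval_sub, eval_mul, eval_mul, ht, zero_mul, zero_mul, sub_zero]
    · rfl
  have hmX : (X ^ L * (X - 1) : A[X]).Monic := by
    refine (monic_X_pow L).mul ?_
    simpa using monic_X_sub_C (1 : A)
  have hdX : (X ^ L * (X - 1) : A[X]).natDegree = L + 1 := by
    rw [(monic_X_pow L).natDegree_mul (by simpa using monic_X_sub_C (1 : A)),
      natDegree_X_pow]
    congr 1
    simpa using natDegree_X_sub_C (1 : A)
  have hdXG : (X ^ L * (X - 1) * G).natDegree = L + 1 + G.natDegree := by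
    rw [hmX.natDegree_mul hG, hdX]
  have hlt : (b1 (a1, true)).natDegree < (X ^ L * (X - 1) * G).natDegree := by omega
  have hmon : (b2 (a1, true)).Monic := by
    rw [e1, add_comm]
    exact (hmX.mul hG).add_of_left (degree_lt_degree hlt)
  have hdeg2 : (b2 (a1, true)).natDegree = L + 1 + G.natDegree := by
    rw [e1, natDegree_add_eq_right_of_natDegree_lt hlt, hdXG]
  have hch := chain d hA hr a1 a2 a3 h12 h13 h23 b2 (by rw [hR2.qf_eq, hb1q])
    (fun P hP hk => hb1u P hP (hR2.symm.mem P hk)) hmon G hG (by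
      rw [Set.image_congr (fun k hk => ek k (Finset.mem_coe.mp hk)), ← hhG]
      refine Ideal.sum_mem _ fun j hj => Ideal.mul_mem_left _ _ (Ideal.subset_span ⟨j, hj, rfl⟩))
    (by rw [hdeg2, e2]; omega) 1 (-1)
  have s1 : (fun j => (b2 j).eval 1) = fun j => (b1 j).eval 1 := by
    ext1 j
    exact hev 1 (by simp) j
  have s0 : (fun j => (b2 j).eval (1 + -1)) = fun j => (b1 j).eval 0 := by
    ext1 j
    rw [add_neg_cancel, hev 0 (by simp [hL])]
  rwa [s1, s0] at hch

open Polynomial in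
theorem main_step {r : ℕ} (K : Type*) [CommRing K] [IsNoetherianRing K] (n D : ℕ)
    (hdim : ringKrullDim K = (D : WithBot ℕ∞)) (hr : 3 ≤ r) (hD : D + 2 ≤ r)
    (a1 a2 a3 : Fin r) (h12 : a1 ≠ a2) (h13 : a1 ≠ a3) (h23 : a2 ≠ a3)
    (b : Idx r → MvPolynomial (Fin n) K)
    (hb : ∀ P : Ideal (MvPolynomial (Fin n) K), P.IsPrime → (∀ k, b k ∈ P) → False)
    (hq : qf b = 0) :
    Reach (4 * (r - 1) + (D + n + 1) * (8 * r - 2) + 7 * (r - 1)) b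
      (fun k => if k = (a1, true) then 1 else 0) := by
  have hnt : Nontrivial K := by
    by_contra h
    rw [not_nontrivial_iff_subsingleton] at h
    rw [ringKrullDim_eq_bot_of_subsingleton] at hdim
    exact absurd hdim (by simp)
  have hK := height_le_of_dim D hdim
  have hdimA : ringKrullDim (MvPolynomial (Fin n) K) = ((D + n : ℕ) : WithBot ℕ∞) := by
    rw [MvPolynomial.ringKrullDim_of_isNoetherianRing, hdim]
    simp
  have hA := height_le_of_dim (D + n) hdimA
  obtain ⟨S, -, hS1, hS2, hS3⟩ := exists_lexMonic K D hK (MvPolynomial (Fin n) K) n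
  obtain ⟨b0, hb0, g, hgS, hgs⟩ := SU_lemma a1 S D hD hS1 hS2 b hb
  obtain ⟨m, hG⟩ := hS3 g hgS MvPolynomial.X
  obtain ⟨h, hh⟩ := mem_span_img _ _ _ hgs
  set θ := MvPolynomial.aeval (R := K) (fun i : Fin n =>
    (X * (C (MvPolynomial.X i) + X ^ (m i) - 1) : (MvPolynomial (Fin n) K)[X])) with hθ
  have ev1 : ∀ a, (θ a).eval 1 = a := by
    intro a
    have : (evalRingHom (1 : MvPolynomial (Fin n) K)).comp θ.toRingHom = RingHom.id _ := by
      refine MvPolynomial.ringHom_ext ?_ ?_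
      · intro k
        simp [hθ, IsScalarTower.algebraMap_apply K (MvPolynomial (Fin n) K)
          (MvPolynomial (Fin n) K)[X], MvPolynomial.algebraMap_eq]
      · intro i
        simp [hθ]
    exact congrArg (fun f => f a) this
  have ev0 : ∀ a, (θ a).eval 0 = MvPolynomial.C (MvPolynomial.constantCoeff a) := by
    intro a
    have : (evalRingHom (0 : MvPolynomial (Fin n) K)).comp θ.toRingHom =
        MvPolynomial.C.comp MvPolynomial.constantCoeff := by
      refine MvPolynomial.ringHom_ext ?_ ?_
      · intro k
        simp [hθ, IsScalarTower.algebraMap_apply K (MvPolynomial (Fin n) K)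
          (MvPolynomial (Fin n) K)[X], MvPolynomial.algebraMap_eq]
      · intro i
        simp [hθ]
    exact congrArg (fun f => f a) this
  have hb0u : ∀ P : Ideal (MvPolynomial (Fin n) K), P.IsPrime → (∀ k, b0 k ∈ P) → False :=
    fun P hP hk => hb P hP (hb0.symm.mem P hk)
  have hb0q : qf b0 = 0 := by rw [hb0.qf_eq, hq]
  set b1 : Idx r → (MvPolynomial (Fin n) K)[X] := fun k => θ (b0 k) with hb1
  have hb1q : qf b1 = 0 := by
    have : qf b1 = θ (qf b0) := by simp [qf, hb1, map_sum]
    rw [this, hb0q, map_zero]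
  have hb1u : ∀ P : Ideal (MvPolynomial (Fin n) K)[X], P.IsPrime → (∀ k, b1 k ∈ P) → False :=
    fun P hP hk => hb0u (P.comap θ) (Ideal.IsPrime.comap θ) hk
  set G := θ g with hGdef
  have hhG : ∑ j ∈ Jb a1 true, θ (h j) * b1 j = G := by
    rw [hGdef, ← hh, map_sum]
    simp [hb1]
  have hch := boost (D + n) hA hr a1 a2 a3 h12 h13 h23 b1 hb1q hb1u (fun j => θ (h j)) G hG hhG
  have s1 : (fun j => (b1 j).eval 1) = b0 := by
    ext1 j
    exact ev1 _
  have s0 : (fun j => (b1 j).eval 0) =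
      fun j => MvPolynomial.C (MvPolynomial.constantCoeff (b0 j)) := by
    ext1 j
    exact ev0 _
  rw [s1, s0] at hch
  have hbase := Base_lemma a1 D hD hK (fun j => MvPolynomial.constantCoeff (b0 j))
    (fun P hP hk => hb0u (P.comap MvPolynomial.constantCoeff) (Ideal.IsPrime.comap _) hk) (by
      have : qf (fun j => MvPolynomial.constantCoeff (b0 j)) =
          MvPolynomial.constantCoeff (qf b0) := by simp [qf, map_sum]
      rw [this, hb0q, map_zero])
  have hfin := (hb0.trans hch).trans (hbase.map MvPolynomial.C)
  convert hfin using 1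
  ext1 j
  split_ifs <;> simp

theorem main_zero {r : ℕ} (K : Type*) [CommRing K] [IsNoetherianRing K] (n D : ℕ) (hn : n = 0)
    (hdim : ringKrullDim K = (D : WithBot ℕ∞)) (hD : D + 2 ≤ r) (a1 : Fin r)
    (b : Idx r → MvPolynomial (Fin n) K)
    (hb : ∀ P : Ideal (MvPolynomial (Fin n) K), P.IsPrime → (∀ k, b k ∈ P) → False)
    (hq : qf b = 0) :
    Reach (7 * (r - 1)) b (fun k => if k = (a1, true) then 1 else 0) := by
  have hdimA : ringKrullDim (MvPolynomial (Fin n) K) = (D : WithBot ℕ∞) := by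
    rw [MvPolynomial.ringKrullDim_of_isNoetherianRing, hdim]
    simp [hn]
  exact Base_lemma a1 D hD (height_le_of_dim D hdimA) b hb hq

theorem bound_one (n D r : ℕ) (hn : n ≠ 0) (hr : 3 ≤ r) :
    4 * (r - 1) + (D + n + 1) * (8 * r - 2) + 7 * (r - 1) ≤
      n * (11 * r - 7) +
          (n * D + r * (r - 1) / 2) * (r * (r - 1) / 2 + (r - 1 + 1) / 2 + 8 * r - 2) +
            8 * r - 8 := by
  have hT : 3 ≤ r * (r - 1) / 2 := by
    have : 3 * 2 ≤ r * (r - 1) := Nat.mul_le_mul hr (by omega)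
    omega
  have hP : 8 * r - 2 ≤ r * (r - 1) / 2 + (r - 1 + 1) / 2 + 8 * r - 2 := by omega
  have h1 : D + 3 ≤ n * D + r * (r - 1) / 2 :=
    Nat.add_le_add (Nat.le_mul_of_pos_left D (by omega)) hT
  have h2 := Nat.mul_le_mul h1 hP
  have h3 : n * (8 * r - 2) ≤ n * (11 * r - 7) := Nat.mul_le_mul le_rfl (by omega)
  have h4 : (D + n + 1) * (8 * r - 2) + 2 * (8 * r - 2) = (D + 3) * (8 * r - 2) + n * (8 * r - 2) := by
    ring
  generalize (n * D + r * (r - 1) / 2) * (r * (r - 1) / 2 + (r - 1 + 1) / 2 + 8 * r - 2) = Q at *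
  generalize (D + n + 1) * (8 * r - 2) = Q2 at *
  generalize (D + 3) * (8 * r - 2) = Q3 at *
  generalize n * (8 * r - 2) = Q4 at *
  generalize n * (11 * r - 7) = Q5 at *
  omega

/-- Bounded reduction of isotropic unimodular columns (even case): for any
`b ∈ IUm_{2r}(C[x_1,…,x_n])`, the first standard basis column `e_1` lies in
`EO(2r,A)^{≤N} · b` with
`N = n(11r−7) + (nD + r(r−1)/2)(r(r−1)/2 + ⌈(r−1)/2⌉ + 8r−2) + 8r−8`. -/
theorem even_column_bounded_reduction
    (C : Type*) [CommRing C] [IsNoetherianRing C] (n D : ℕ)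
    (hdim : ringKrullDim C = (D : WithBot ℕ∞))
    (r : ℕ) (hr : max 3 (D + 2) ≤ r)
    (b : Fin (2 * r) → MvPolynomial (Fin n) C)
    (hb : b ∈ IUmE r (MvPolynomial (Fin n) C)) :
    ∃ E ∈ EOE r
        (n * (11 * r - 7) +
          (n * D + r * (r - 1) / 2) * (r * (r - 1) / 2 + (r - 1 + 1) / 2 + 8 * r - 2) +
            8 * r - 8)
        (MvPolynomial (Fin n) C),
      E.mulVec b = fun i : Fin (2 * r) => if i.val = 0 then 1 else 0 := by
  obtain ⟨hr3, hrD⟩ := max_le_iff.mp hr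
  obtain ⟨hb1, hb2⟩ := hb
  have hu : ∀ P : Ideal (MvPolynomial (Fin n) C), P.IsPrime →
      (∀ k, (fun i => b (posE r i)) k ∈ P) → False := by
    intro P hP hk
    refine hP.ne_top (top_le_iff.mp ?_)
    rw [← hb1, Ideal.span_le]
    rintro _ ⟨i, rfl⟩
    obtain ⟨k, rfl⟩ := posE_surj r i
    exact hk k
  rw [quadE_eq] at hb2
  have hR : Reach (n * (11 * r - 7) +
          (n * D + r * (r - 1) / 2) * (r * (r - 1) / 2 + (r - 1 + 1) / 2 + 8 * r - 2) +
            8 * r - 8) (fun i => b (posE r i))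
      (fun k => if k = ((⟨0, by omega⟩ : Fin r), true) then 1 else 0) := by
    by_cases hn : n = 0
    · refine (main_zero C n D hn hdim hrD ⟨0, by omega⟩ _ hu hb2).mono ?_
      generalize (n * D + r * (r - 1) / 2) * (r * (r - 1) / 2 + (r - 1 + 1) / 2 + 8 * r - 2) = Q
      omega
    · exact (main_step C n D hdim hr3 hrD ⟨0, by omega⟩ ⟨1, by omega⟩ ⟨2, by omega⟩
        (by simp) (by simp) (by simp) _ hu hb2).mono (bound_one n D r hn hr3)
  obtain ⟨E, hE, hEb⟩ := hR.toEOE b rfl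
  refine ⟨E, hE, ?_⟩
  ext1 i
  obtain ⟨⟨k, s⟩, rfl⟩ := posE_surj r i
  have := congrFun hEb (k, s)
  rw [this]
  rcases s with _ | _
  · rw [if_neg (by simp), if_neg]
    simp [posE]; omega
  · simp [posE, Fin.ext_iff]
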